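/- arXiv:1912.07707 — 2 statements merged into one kernel-verified Lean document; each statement's English description precedes it below -/
import Mathlib

section
/- Let d ≥ 1, 1 < p < ∞, m ∈ ℤ_{≥0} and δ ∈ ℝ. For every v ∈ C_c^∞(ℝ^d), ‖(S(t)v − v)/t − Δv‖_{H^{m,p}_δ} → 0 as t → 0⁺. In particular the Laplacian is the generator of the heat semigroup on the weighted Sobolev space, acting on smooth compactly supported functions. -/
open MeasureTheory

/-- The Japanese bracket `⟨x⟩ = √(1 + |x|²)`. -/
noncomputable def jb {d : ℕ} (x : EuclideanSpace ℝ (Fin d)) : ℝ := Real.sqrt (1 + ‖x‖ ^ 2)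

/-- Partial derivative in the `i`-th coordinate direction. -/
noncomputable def pderiv' {d : ℕ} {F : Type*} [NormedAddCommGroup F] [NormedSpace ℝ F]
    (i : Fin d) (f : EuclideanSpace ℝ (Fin d) → F) : EuclideanSpace ℝ (Fin d) → F :=
  fun x => fderiv ℝ f x (EuclideanSpace.single i 1)

/-- Multi-index derivative `∂^α f`. -/
noncomputable def mderiv {d : ℕ} {F : Type*} [NormedAddCommGroup F] [NormedSpace ℝ F]
    (α : Fin d → ℕ) (f : EuclideanSpace ℝ (Fin d) → F) : EuclideanSpace ℝ (Fin d) → F :=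
  (List.finRange d).foldr (fun i g => (pderiv' i)^[α i] g) f

/-- The Laplacian `Δf = Σ_i ∂_i ∂_i f`. -/
noncomputable def lap {d : ℕ} {F : Type*} [NormedAddCommGroup F] [NormedSpace ℝ F]
    (f : EuclideanSpace ℝ (Fin d) → F) : EuclideanSpace ℝ (Fin d) → F :=
  fun x => ∑ i : Fin d, pderiv' i (pderiv' i f) x

/-- Weighted `L^p` norm `‖⟨x⟩^δ f‖_{L^p}`. -/
noncomputable def wLp {d : ℕ} {F : Type*} [NormedAddCommGroup F] [NormedSpace ℝ F]
    (p δ : ℝ) (f : EuclideanSpace ℝ (Fin d) → F) : ℝ :=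
  (eLpNorm (fun x => jb x ^ δ • f x) (ENNReal.ofReal p) volume).toReal

/-- Weighted Sobolev norm `‖f‖_{H^{m,p}_δ} = Σ_{|α| ≤ m} ‖⟨x⟩^δ ∂^α f‖_{L^p}`. -/
noncomputable def Hnorm (d m : ℕ) {F : Type*} [NormedAddCommGroup F] [NormedSpace ℝ F]
    (p δ : ℝ) (f : EuclideanSpace ℝ (Fin d) → F) : ℝ :=
  ∑ α ∈ Finset.univ.filter (fun α : Fin d → Fin (m + 1) => ∑ i, (α i : ℕ) ≤ m),
    wLp p δ (mderiv (fun i => (α i : ℕ)) f)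

/-- The heat semigroup `S(t)` for real time (with `S(0) = id`). -/
noncomputable def heatS (d : ℕ) (t : ℝ) (v : EuclideanSpace ℝ (Fin d) → ℝ) :
    EuclideanSpace ℝ (Fin d) → ℝ :=
  if t = 0 then v else fun x =>
    (4 * Real.pi * t) ^ (-(d : ℝ) / 2) * ∫ y, Real.exp (-‖x - y‖ ^ 2 / (4 * t)) * v y

open ProbabilityTheory

noncomputable def gk (d : ℕ) (z : EuclideanSpace ℝ (Fin d)) : ℝ :=
  ∏ i, gaussianPDFReal 0 2 (z i)

lemma gk_eq (d : ℕ) (z : EuclideanSpace ℝ (Fin d)) :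
    gk d z = (4 * Real.pi) ^ (-(d : ℝ) / 2) * Real.exp (-‖z‖ ^ 2 / 4) := by
  unfold gk gaussianPDFReal
  rw [Finset.prod_mul_distrib, ← Real.exp_sum, EuclideanSpace.real_norm_sq_eq]
  congr 1
  · simp only [Finset.prod_const, Finset.card_univ, Fintype.card_fin]
    have h : (2 * Real.pi * ((2 : NNReal) : ℝ)) = 4 * Real.pi := by push_cast; ring
    have hpos : 0 < 4 * Real.pi := by positivity
    rw [h, Real.sqrt_eq_rpow, ← Real.rpow_neg hpos.le, ← Real.rpow_natCast, ← Real.rpow_mul hpos.le]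
    congr 1; ring
  · congr 1
    rw [neg_div, Finset.sum_div, ← Finset.sum_neg_distrib]
    refine Finset.sum_congr rfl fun i _ => ?_
    push_cast; ring

lemma gk_nonneg (d : ℕ) (z : EuclideanSpace ℝ (Fin d)) : 0 ≤ gk d z :=
  Finset.prod_nonneg fun _ _ => gaussianPDFReal_nonneg _ _ _

lemma gk_cont (d : ℕ) : Continuous (gk d) := by
  have : gk d = fun z => (4 * Real.pi) ^ (-(d : ℝ) / 2) * Real.exp (-‖z‖ ^ 2 / 4) :=
    funext (gk_eq d)
  rw [this]; fun_prop

lemma integrable_gauss (d : ℕ) {b : ℝ} (hb : 0 < b) :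
    Integrable (fun z : EuclideanSpace ℝ (Fin d) => Real.exp (-b * ‖z‖ ^ 2)) := by
  by_contra h
  have h1 := integral_undef h
  rw [GaussianFourier.integral_rexp_neg_mul_sq_norm hb] at h1
  have : 0 < (Real.pi / b) ^ ((Module.finrank ℝ (EuclideanSpace ℝ (Fin d)) : ℝ) / 2) := by
    positivity
  linarith

lemma gk_poly_int (d N : ℕ) : Integrable (fun z => gk d z * (1 + ‖z‖) ^ N) := by
  have hi := (integrable_gauss d (b := 1 / 8) (by norm_num)).const_mul
    ((4 * Real.pi) ^ (-(d : ℝ) / 2) * (N.factorial * Real.exp 3))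
  refine hi.mono' ?_ ?_
  · exact ((gk_cont d).mul (by fun_prop)).aestronglyMeasurable
  · refine Filter.Eventually.of_forall fun z => ?_
    rw [Real.norm_of_nonneg (mul_nonneg (gk_nonneg d z) (by positivity)), gk_eq, mul_assoc, mul_assoc]
    refine mul_le_mul_of_nonneg_left ?_ (by positivity)
    have h1 := Real.pow_div_factorial_le_exp (1 + ‖z‖) (by positivity) N
    rw [div_le_iff₀ (by positivity)] at h1
    calc Real.exp (-‖z‖ ^ 2 / 4) * (1 + ‖z‖) ^ N
        ≤ Real.exp (-‖z‖ ^ 2 / 4) * (Real.exp (1 + ‖z‖) * N.factorial) := by gcongr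
      _ = N.factorial * Real.exp (-‖z‖ ^ 2 / 4 + (1 + ‖z‖)) := by rw [Real.exp_add (-‖z‖ ^ 2 / 4)]; ring
      _ ≤ N.factorial * Real.exp (3 + -(1 / 8) * ‖z‖ ^ 2) := by
          refine mul_le_mul_of_nonneg_left (Real.exp_le_exp.2 ?_) (by positivity)
          nlinarith [sq_nonneg (‖z‖ - 4)]
      _ = _ := by rw [Real.exp_add]; ring

lemma coord_le {d : ℕ} (z : EuclideanSpace ℝ (Fin d)) (i : Fin d) : |z i| ≤ ‖z‖ := by
  simpa using PiLp.norm_apply_le z i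

lemma gk_int (d : ℕ) : Integrable (gk d) := by simpa using gk_poly_int d 0

/-- anything with polynomial growth is integrable -/
lemma gk_int_of {d N : ℕ} {f : EuclideanSpace ℝ (Fin d) → ℝ} (hf : Continuous f)
    (C : ℝ) (h : ∀ z, |f z| ≤ C * (1 + ‖z‖) ^ N) : Integrable (fun z => gk d z * f z) := by
  refine ((gk_poly_int d N).const_mul C).mono' ((gk_cont d).mul hf).aestronglyMeasurable ?_
  refine Filter.Eventually.of_forall fun z => ?_
  rw [norm_mul, Real.norm_of_nonneg (gk_nonneg d z), Real.norm_eq_abs]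
  calc _ ≤ gk d z * (C * (1 + ‖z‖) ^ N) := mul_le_mul_of_nonneg_left (h z) (gk_nonneg d z)
    _ = _ := by ring

lemma gk_prod_integral (d : ℕ) (f : Fin d → ℝ → ℝ) :
    ∫ z, gk d z * ∏ i, f i (z i) = ∏ i, ∫ x, gaussianPDFReal 0 2 x * f i x := by
  rw [← integral_fintype_prod_volume_eq_prod]
  rw [← (EuclideanSpace.volume_preserving_symm_measurableEquiv_toLp (Fin d)).integral_comp
    (MeasurableEquiv.measurableEmbedding _)]
  refine integral_congr_ae (Filter.Eventually.of_forall fun z => ?_)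
  simp only [gk, Finset.prod_mul_distrib]
  rfl

lemma g0 : ∫ x, gaussianPDFReal 0 2 x = 1 := integral_gaussianPDFReal_eq_one 0 (by norm_num)

lemma g1 : ∫ x, gaussianPDFReal 0 2 x * x = 0 := by
  have := integral_gaussianReal_eq_integral_smul (μ := 0) (v := 2) (f := fun x : ℝ => x) (by norm_num)
  rw [integral_id_gaussianReal] at this
  simpa using this.symm

lemma g2 : ∫ x, gaussianPDFReal 0 2 x * (x * x) = 2 := by
  have := integral_gaussianReal_eq_integral_smul (μ := 0) (v := 2) (f := fun x : ℝ => x * x)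
    (by norm_num)
  have h2 := variance_id_gaussianReal (μ := 0) (v := 2)
  rw [variance_eq_integral (by fun_prop)] at h2
  simp only [id, integral_id_gaussianReal, sub_zero] at h2
  simp only [smul_eq_mul] at this
  rw [← this]
  simpa [sq] using h2

lemma m0 (d : ℕ) : ∫ z, gk d z = 1 := by
  have := gk_prod_integral d (fun _ _ => 1)
  simpa [g0] using this

lemma m1 (d : ℕ) (i : Fin d) : ∫ z, gk d z * z i = 0 := by
  have := gk_prod_integral d (fun k x => if k = i then x else 1)
  simp only [Finset.prod_ite_eq', Finset.mem_univ, if_true] at this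
  rw [this]
  refine Finset.prod_eq_zero (Finset.mem_univ i) ?_
  simpa using g1

lemma m2 (d : ℕ) (i j : Fin d) : ∫ z, gk d z * (z i * z j) = if i = j then 2 else 0 := by
  have := gk_prod_integral d (fun k x => (if k = i then x else 1) * (if k = j then x else 1))
  simp only [Finset.prod_mul_distrib, Finset.prod_ite_eq', Finset.mem_univ, if_true] at this
  rw [this]
  split_ifs with h
  · subst h
    rw [Finset.prod_eq_single i]
    · simpa using g2
    · intro b _ hb; simp [hb, g0]
    · simp
  · refine Finset.prod_eq_zero (Finset.mem_univ i) ?_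
    simpa [h] using g1

lemma heat_eq (d : ℕ) {t : ℝ} (ht : 0 < t) (f : EuclideanSpace ℝ (Fin d) → ℝ)
    (x : EuclideanSpace ℝ (Fin d)) :
    heatS d t f x = ∫ z, gk d z * f (x + Real.sqrt t • z) := by
  have hs : 0 < Real.sqrt t := Real.sqrt_pos.2 ht
  have hss : Real.sqrt t ^ 2 = t := Real.sq_sqrt ht.le
  have h1 := Measure.integral_comp_smul volume
    (fun y : EuclideanSpace ℝ (Fin d) => gk d ((Real.sqrt t)⁻¹ • y) * f (x + y)) (Real.sqrt t)
  simp only [inv_smul_smul₀ hs.ne'] at h1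
  rw [h1, ← integral_add_left_eq_self (μ := volume) (fun y : EuclideanSpace ℝ (Fin d) =>
    gk d ((Real.sqrt t)⁻¹ • y) * f (x + y)) (-x)]
  simp only [heatS, ht.ne', if_false, add_neg_cancel_left]
  simp only [gk_eq, smul_eq_mul, mul_assoc]
  rw [integral_const_mul, ← mul_assoc |(_)⁻¹|]
  congr 1
  · simp only [finrank_euclideanSpace, Fintype.card_fin]
    rw [abs_of_pos (by positivity), ← mul_assoc 4, Real.mul_rpow (by positivity) ht.le, mul_comm]
    congr 1
    rw [← Real.rpow_natCast, ← Real.rpow_neg hs.le, Real.sqrt_eq_rpow, ← Real.rpow_mul ht.le]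
    congr 1; ring
  · refine integral_congr_ae (Filter.Eventually.of_forall fun y => ?_)
    have : -‖(Real.sqrt t)⁻¹ • (-x + y)‖ ^ 2 / 4 = -‖x - y‖ ^ 2 / (4 * t) := by
      rw [norm_smul, mul_pow, norm_inv, inv_pow, Real.norm_of_nonneg hs.le, hss,
        show -x + y = -(x - y) by abel, norm_neg]
      field_simp
    simp only [this]

def Good {d : ℕ} (f : EuclideanSpace ℝ (Fin d) → ℝ) : Prop :=
  ContDiff ℝ (⊤ : ℕ∞) f ∧ HasCompactSupport f

lemma Good.pd {d : ℕ} {f : EuclideanSpace ℝ (Fin d) → ℝ} (hf : Good f) (i : Fin d) :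
    Good (pderiv' i f) := by
  refine ⟨?_, ?_⟩
  · unfold pderiv'
    exact (hf.1.fderiv_right (m := (⊤ : ℕ∞)) (by simp)).clm_apply contDiff_const
  · exact (hf.2.fderiv ℝ).comp_left (g := fun L : EuclideanSpace ℝ (Fin d) →L[ℝ] ℝ =>
      L (EuclideanSpace.single i 1)) rfl

lemma Good.diff {d : ℕ} {f : EuclideanSpace ℝ (Fin d) → ℝ} (hf : Good f) : Differentiable ℝ f :=
  hf.1.differentiable (by simp)

lemma Good.bdd {d : ℕ} {f : EuclideanSpace ℝ (Fin d) → ℝ} (hf : Good f) : ∃ C, ∀ x, |f x| ≤ C :=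
  hf.2.exists_bound_of_continuous hf.1.continuous

lemma pd_comm {d : ℕ} {f : EuclideanSpace ℝ (Fin d) → ℝ} (hf : Good f) (i j : Fin d) :
    pderiv' i (pderiv' j f) = pderiv' j (pderiv' i f) := by
  have key : ∀ (i j : Fin d) x, pderiv' i (pderiv' j f) x =
      fderiv ℝ (fderiv ℝ f) x (EuclideanSpace.single i 1) (EuclideanSpace.single j 1) := by
    intro i j x
    have hd : DifferentiableAt ℝ (fderiv ℝ f) x :=
      ((hf.1.fderiv_right (m := (⊤ : ℕ∞)) (by simp)).differentiable (by simp)) x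
    unfold pderiv'
    rw [fderiv_clm_apply hd (by fun_prop)]
    simp
  funext x
  rw [key, key]
  have hc : ContDiffAt ℝ (⊤ : ℕ∞) f x := hf.1.contDiffAt
  have : minSmoothness ℝ 2 ≤ ((⊤ : ℕ∞) : WithTop ℕ∞) := by
    simp only [minSmoothness_of_isRCLikeNormedField]
    exact WithTop.coe_le_coe.2 (le_top : (2 : ℕ∞) ≤ ⊤)
  exact (hc.isSymmSndFDerivAt this) _ _

lemma line_deriv {d : ℕ} {f : EuclideanSpace ℝ (Fin d) → ℝ} (hf : Good f)
    (x z : EuclideanSpace ℝ (Fin d)) (r : ℝ) :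
    HasDerivAt (fun r : ℝ => f (x + r • z)) (∑ i, z i * pderiv' i f (x + r • z)) r := by
  have h1 : HasDerivAt (fun r : ℝ => x + r • z) z r := by
    simpa using ((hasDerivAt_id r).smul_const z).const_add x
  have h2 := (hf.diff (x + r • z)).hasFDerivAt.comp_hasDerivAt r h1
  have h3 : (∑ i, z i * pderiv' i f (x + r • z)) = fderiv ℝ f (x + r • z) z := by
    have hz : z = ∑ i, z i • EuclideanSpace.single i (1 : ℝ) := by
      have := (EuclideanSpace.basisFun (Fin d) ℝ).sum_repr z
      simpa using this.symm
    simp only [pderiv']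
    generalize fderiv ℝ f (x + r • z) = L
    conv_rhs => rw [hz]
    simp [-WithLp.ofLp_sum]
  rw [h3]
  exact h2

lemma mv {φ φ' : ℝ → ℝ} (h : ∀ r, HasDerivAt φ (φ' r) r) {s K : ℝ} (hK : 0 ≤ K)
    (hb : ∀ r ∈ Set.Icc 0 s, |φ' r| ≤ K) : ∀ r ∈ Set.Icc 0 s, |φ r - φ 0| ≤ K * s := by
  intro r hr
  have := (convex_Icc 0 s).norm_image_sub_le_of_norm_hasDerivWithin_le
    (fun x _ => (h x).hasDerivWithinAt) hb ⟨le_rfl, hr.1.trans hr.2⟩ hr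
  simp only [Real.norm_eq_abs, sub_zero] at this
  refine this.trans ?_
  rw [abs_of_nonneg hr.1]
  exact mul_le_mul_of_nonneg_left hr.2 hK

lemma taylor3 {φ φ1 φ2 φ3 : ℝ → ℝ} (h1 : ∀ r, HasDerivAt φ (φ1 r) r)
    (h2 : ∀ r, HasDerivAt φ1 (φ2 r) r) (h3 : ∀ r, HasDerivAt φ2 (φ3 r) r)
    {K : ℝ} (hK : 0 ≤ K) (hb : ∀ r, |φ3 r| ≤ K) {s : ℝ} (hs : 0 ≤ s) :
    |φ s - φ 0 - s * φ1 0 - s ^ 2 / 2 * φ2 0| ≤ K * s ^ 3 := by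
  have a2 := mv h3 (s := s) hK (fun r _ => hb r)
  have a1 := mv (φ := fun r => φ1 r - r * φ2 0) (φ' := fun r => φ2 r - φ2 0)
    (fun r => by
      simpa using (h2 r).fun_sub ((hasDerivAt_id r).mul_const (φ2 0))) (by positivity) a2
  have a0 := mv (φ := fun r => φ r - r * φ1 0 - r ^ 2 / 2 * φ2 0)
    (φ' := fun r => (φ1 r - r * φ2 0) - (φ1 0 - 0 * φ2 0))
    (fun r => by
      have := ((h1 r).fun_sub ((hasDerivAt_id' r).mul_const (φ1 0))).fun_sub
        ((((hasDerivAt_id' r).fun_pow 2).div_const 2).mul_const (φ2 0))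
      have e : (φ1 r - r * φ2 0) - (φ1 0 - 0 * φ2 0) =
          φ1 r - 1 * φ1 0 - ((2 : ℕ) : ℝ) * r ^ (2 - 1) * 1 / 2 * φ2 0 := by
        norm_num; ring
      rw [e]; exact this) (by positivity) a1 s ⟨hs, le_rfl⟩
  convert a0 using 1
  · congr 1; ring
  · ring

noncomputable def Rem {d : ℕ} (f : EuclideanSpace ℝ (Fin d) → ℝ) (s : ℝ)
    (x z : EuclideanSpace ℝ (Fin d)) : ℝ :=
  f (x + s • z) - f x - s * (∑ i, z i * pderiv' i f x)
    - s ^ 2 / 2 * ∑ i, z i * ∑ j, z j * pderiv' j (pderiv' i f) x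

lemma rem_bound {d : ℕ} {f : EuclideanSpace ℝ (Fin d) → ℝ} (hf : Good f) :
    ∃ K, 0 ≤ K ∧ ∀ s, 0 ≤ s → ∀ x z, |Rem f s x z| ≤ K * ‖z‖ ^ 3 * s ^ 3 := by
  choose C hC using fun i j k => (((hf.pd i).pd j).pd k).bdd
  have hC0 : ∀ i j k, 0 ≤ C i j k := fun i j k => (abs_nonneg _).trans (hC i j k 0)
  refine ⟨∑ i, ∑ j, ∑ k, C i j k, Finset.sum_nonneg fun i _ => Finset.sum_nonneg fun j _ =>
    Finset.sum_nonneg fun k _ => hC0 i j k, fun s hs x z => ?_⟩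
  have hK : 0 ≤ (∑ i, ∑ j, ∑ k, C i j k) * ‖z‖ ^ 3 := mul_nonneg
    (Finset.sum_nonneg fun i _ => Finset.sum_nonneg fun j _ =>
      Finset.sum_nonneg fun k _ => hC0 i j k) (by positivity)
  have := taylor3 (φ := fun r => f (x + r • z))
    (φ1 := fun r => ∑ i, z i * pderiv' i f (x + r • z))
    (φ2 := fun r => ∑ i, z i * ∑ j, z j * pderiv' j (pderiv' i f) (x + r • z))
    (φ3 := fun r => ∑ i, z i * ∑ j, z j * ∑ k, z k * pderiv' k (pderiv' j (pderiv' i f)) (x + r • z))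
    (fun r => line_deriv hf x z r)
    (fun r => HasDerivAt.fun_sum fun i _ => (line_deriv (hf.pd i) x z r).const_mul _)
    (fun r => HasDerivAt.fun_sum fun i _ => HasDerivAt.const_mul _ <|
      HasDerivAt.fun_sum fun j _ => (line_deriv ((hf.pd i).pd j) x z r).const_mul _)
    hK (fun r => ?_) hs
  · simpa [Rem] using this
  · simp only [Finset.mul_sum, Finset.sum_mul]
    refine (Finset.abs_sum_le_sum_abs _ _).trans (Finset.sum_le_sum fun i _ => ?_)
    refine (Finset.abs_sum_le_sum_abs _ _).trans (Finset.sum_le_sum fun j _ => ?_)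
    refine (Finset.abs_sum_le_sum_abs _ _).trans (Finset.sum_le_sum fun k _ => ?_)
    simp only [abs_mul]
    calc _ ≤ ‖z‖ * (‖z‖ * (‖z‖ * C i j k)) := by
          gcongr <;> first | exact coord_le z _ | exact hC _ _ _ _
      _ = _ := by ring

lemma pd_zero {d : ℕ} {f : EuclideanSpace ℝ (Fin d) → ℝ} {R : ℝ} (h : ∀ x, R < ‖x‖ → f x = 0)
    (i : Fin d) : ∀ x, R < ‖x‖ → pderiv' i f x = 0 := by
  intro x hx
  have : f =ᶠ[nhds x] fun _ => 0 := by
    filter_upwards [(isOpen_lt continuous_const continuous_norm).mem_nhds hx] with y hy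
    exact h y hy
  simp [pderiv', this.fderiv_eq]

lemma rem_bound2 {d : ℕ} {f : EuclideanSpace ℝ (Fin d) → ℝ} (hf : Good f) (N : ℕ) :
    ∃ K, 0 ≤ K ∧ ∀ s, 0 ≤ s → s ≤ 1 → ∀ x z,
      (1 + ‖x‖) ^ N * |Rem f s x z| ≤ K * s ^ 3 * (1 + ‖z‖) ^ (N + 3) := by
  obtain ⟨K, hK, hKb⟩ := rem_bound hf
  obtain ⟨R, hR⟩ := hf.2.isCompact.isBounded.subset_closedBall 0
  have hz0 : ∀ x, max R 0 < ‖x‖ → f x = 0 := by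
    intro x hx
    by_contra h
    have := hR (subset_tsupport f h)
    rw [mem_closedBall_zero_iff] at this
    exact absurd (lt_of_le_of_lt (le_max_left R 0) hx) (not_lt.2 this)
  generalize max R 0 = R' at hz0
  clear hR
  have hz : ∀ x, max R' 0 < ‖x‖ → f x = 0 := fun x hx => hz0 x ((le_max_left _ _).trans_lt hx)
  have hR0 : 0 ≤ max R' 0 := le_max_right _ _
  generalize max R' 0 = R at hz hR0
  refine ⟨K * (1 + R) ^ N, by positivity, fun s hs hs1 x z => ?_⟩
  by_cases hx : ‖x‖ ≤ R + ‖z‖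
  · have h1 : 1 + ‖x‖ ≤ (1 + R) * (1 + ‖z‖) := by nlinarith [norm_nonneg z]
    calc (1 + ‖x‖) ^ N * |Rem f s x z|
        ≤ ((1 + R) * (1 + ‖z‖)) ^ N * (K * (1 + ‖z‖) ^ 3 * s ^ 3) := by
          gcongr
          refine (hKb s hs x z).trans ?_
          gcongr; linarith
      _ = _ := by rw [mul_pow, pow_add]; ring
  · push Not at hx
    have e1 : R < ‖x‖ := by linarith [norm_nonneg z]
    have e2 : R < ‖x + s • z‖ := by
      have : ‖x‖ ≤ ‖x + s • z‖ + ‖s • z‖ := by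
        simpa using norm_sub_le (x + s • z) (s • z)
      have h3 : ‖s • z‖ ≤ ‖z‖ := by
        rw [norm_smul, Real.norm_of_nonneg hs]
        exact mul_le_of_le_one_left (norm_nonneg z) hs1
      linarith
    have : Rem f s x z = 0 := by
      simp [Rem, hz _ e1, hz _ e2, pd_zero hz _ x e1, pd_zero (pd_zero hz _) _ x e1]
    rw [this]; simp; positivity

lemma gk_comp_int {d : ℕ} {f : EuclideanSpace ℝ (Fin d) → ℝ} (hf : Good f) (s : ℝ)
    (x : EuclideanSpace ℝ (Fin d)) : Integrable (fun z => gk d z * f (x + s • z)) := by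
  obtain ⟨C, hC⟩ := hf.bdd
  have hc := hf.1.continuous
  exact gk_int_of (N := 0) (by fun_prop) C (fun z => by simpa using hC _)

lemma gk_m1_int {d : ℕ} (i : Fin d) : Integrable (fun z => gk d z * z i) :=
  gk_int_of (N := 1) (by fun_prop) 1 (fun z => by
    have := coord_le z i
    simp only [pow_one, one_mul]; linarith)

lemma gk_m2_int {d : ℕ} (i j : Fin d) : Integrable (fun z => gk d z * (z i * z j)) :=
  gk_int_of (N := 2) (by fun_prop) 1 (fun z => by
    rw [abs_mul, one_mul, sq]
    exact mul_le_mul ((coord_le z i).trans (by linarith)) ((coord_le z j).trans (by linarith))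
      (abs_nonneg _) (by positivity))

noncomputable def Err {d : ℕ} (t : ℝ) (f : EuclideanSpace ℝ (Fin d) → ℝ) :
    EuclideanSpace ℝ (Fin d) → ℝ := fun x => (heatS d t f x - f x) / t - lap f x

lemma err_eq {d : ℕ} {f : EuclideanSpace ℝ (Fin d) → ℝ} (hf : Good f) {t : ℝ} (ht : 0 < t)
    (x : EuclideanSpace ℝ (Fin d)) :
    Err t f x = t⁻¹ * ∫ z, gk d z * Rem f (Real.sqrt t) x z := by
  have hss : Real.sqrt t ^ 2 = t := Real.sq_sqrt ht.le
  have hexp : ∀ z, gk d z * Rem f (Real.sqrt t) x z =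
      ((gk d z * f (x + Real.sqrt t • z) - f x * gk d z)
      - ∑ i, (Real.sqrt t * pderiv' i f x) * (gk d z * z i))
      - ∑ i, ∑ j, (t / 2 * pderiv' j (pderiv' i f) x) * (gk d z * (z i * z j)) := by
    intro z
    rw [Rem, hss, mul_sub, mul_sub, mul_sub]
    congr 1
    · congr 1
      · rw [mul_comm (f x)]
      · simp only [Finset.mul_sum]
        exact Finset.sum_congr rfl fun i _ => by ring
    · simp only [Finset.mul_sum]
      exact Finset.sum_congr rfl fun i _ => Finset.sum_congr rfl fun j _ => by ring
  have i1 := gk_comp_int hf (Real.sqrt t) x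
  have i2 := (gk_int d).const_mul (f x)
  have i3 : Integrable (fun z => ∑ i, (Real.sqrt t * pderiv' i f x) * (gk d z * z i)) :=
    integrable_finsetSum _ fun i _ => (gk_m1_int i).const_mul _
  have i4' : ∀ i, Integrable
      (fun z => ∑ j, (t / 2 * pderiv' j (pderiv' i f) x) * (gk d z * (z i * z j))) :=
    fun i => integrable_finsetSum _ fun j _ => (gk_m2_int i j).const_mul _
  have i4 : Integrable
      (fun z => ∑ i, ∑ j, (t / 2 * pderiv' j (pderiv' i f) x) * (gk d z * (z i * z j))) :=
    integrable_finsetSum _ fun i _ => i4' i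
  simp only [hexp]
  rw [integral_sub (by exact (i1.sub i2).sub i3) i4, integral_sub (by exact i1.sub i2) i3, integral_sub i1 i2,
    integral_finsetSum _ fun i _ => (gk_m1_int i).const_mul _,
    integral_finsetSum _ fun i _ => i4' i, ← heat_eq d ht]
  have e4 : ∀ i, ∫ z, ∑ j, (t / 2 * pderiv' j (pderiv' i f) x) * (gk d z * (z i * z j)) =
      t * pderiv' i (pderiv' i f) x := by
    intro i
    rw [integral_finsetSum _ fun j _ => (gk_m2_int i j).const_mul _]
    simp only [integral_const_mul, m2]
    simp; ring
  simp only [e4, integral_const_mul, m1, m0, mul_zero, Finset.sum_const_zero, mul_one, sub_zero,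
    ← Finset.mul_sum]
  rw [Err, lap]
  field_simp

lemma err_bound {d : ℕ} {f : EuclideanSpace ℝ (Fin d) → ℝ} (hf : Good f) (N : ℕ) :
    ∃ K, 0 ≤ K ∧ ∀ t, 0 < t → t ≤ 1 → ∀ x, (1 + ‖x‖) ^ N * |Err t f x| ≤ K * Real.sqrt t := by
  obtain ⟨K, hK, hb⟩ := rem_bound2 hf N
  have hM : 0 ≤ ∫ z, gk d z * (1 + ‖z‖) ^ (N + 3) :=
    integral_nonneg fun z => mul_nonneg (gk_nonneg d z) (by positivity)
  refine ⟨K * ∫ z, gk d z * (1 + ‖z‖) ^ (N + 3), by positivity, fun t ht ht1 x => ?_⟩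
  have hs : 0 < Real.sqrt t := Real.sqrt_pos.2 ht
  have hss : Real.sqrt t ^ 2 = t := Real.sq_sqrt ht.le
  have hs1 : Real.sqrt t ≤ 1 := Real.sqrt_le_one.2 ht1
  have key : ‖∫ z, (1 + ‖x‖) ^ N * (gk d z * Rem f (Real.sqrt t) x z)‖ ≤
      ∫ z, (K * Real.sqrt t ^ 3) * (gk d z * (1 + ‖z‖) ^ (N + 3)) := by
    refine norm_integral_le_of_norm_le ((gk_poly_int d (N + 3)).const_mul _)
      (Filter.Eventually.of_forall fun z => ?_)
    rw [norm_mul, norm_mul, Real.norm_of_nonneg (gk_nonneg d z), Real.norm_eq_abs,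
      Real.norm_eq_abs, abs_of_nonneg (by positivity : (0 : ℝ) ≤ (1 + ‖x‖) ^ N)]
    have := mul_le_mul_of_nonneg_left (hb _ hs.le hs1 x z) (gk_nonneg d z)
    calc _ = gk d z * ((1 + ‖x‖) ^ N * |Rem f (Real.sqrt t) x z|) := by ring
      _ ≤ _ := this
      _ = _ := by ring
  rw [integral_const_mul, integral_const_mul, norm_mul, Real.norm_eq_abs, Real.norm_eq_abs,
    abs_of_nonneg (by positivity : (0 : ℝ) ≤ (1 + ‖x‖) ^ N)] at key
  rw [err_eq hf ht, abs_mul, abs_of_pos (inv_pos.2 ht)]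
  calc _ = t⁻¹ * ((1 + ‖x‖) ^ N * |∫ z, gk d z * Rem f (Real.sqrt t) x z|) := by ring
    _ ≤ t⁻¹ * ((K * Real.sqrt t ^ 3) * ∫ z, gk d z * (1 + ‖z‖) ^ (N + 3)) := by gcongr
    _ = (t⁻¹ * Real.sqrt t ^ 2) * ((K * Real.sqrt t) * ∫ z, gk d z * (1 + ‖z‖) ^ (N + 3)) := by ring
    _ = _ := by rw [hss, inv_mul_cancel₀ ht.ne']; ring

lemma heat_hasFDeriv {d : ℕ} {f : EuclideanSpace ℝ (Fin d) → ℝ} (hf : Good f) {t : ℝ} (ht : 0 < t)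
    (x : EuclideanSpace ℝ (Fin d)) :
    HasFDerivAt (heatS d t f) (∫ z, gk d z • fderiv ℝ f (x + Real.sqrt t • z)) x ∧
    Integrable (fun z => gk d z • fderiv ℝ f (x + Real.sqrt t • z)) := by
  have hdc : Continuous (fderiv ℝ f) := hf.1.continuous_fderiv (by simp)
  have hc := hf.1.continuous
  have hg := gk_cont d
  obtain ⟨C, hC⟩ := (hf.2.fderiv ℝ).exists_bound_of_continuous hdc
  have hbd : ∀ x z, ‖gk d z • fderiv ℝ f (x + Real.sqrt t • z)‖ ≤ C * gk d z := by
    intro x z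
    rw [norm_smul, Real.norm_of_nonneg (gk_nonneg d z), mul_comm]
    exact mul_le_mul_of_nonneg_right (hC _) (gk_nonneg d z)
  have hm : ∀ x, AEStronglyMeasurable (fun z => gk d z • fderiv ℝ f (x + Real.sqrt t • z))
      volume := fun x => (Continuous.aestronglyMeasurable (by fun_prop))
  refine ⟨?_, ((gk_int d).const_mul C).mono' (hm x) (Filter.Eventually.of_forall (hbd x))⟩
  have : heatS d t f = fun x => ∫ z, gk d z * f (x + Real.sqrt t • z) :=
    funext fun x => heat_eq d ht f x
  rw [this]
  refine hasFDerivAt_integral_of_dominated_of_fderiv_le (s := Set.univ)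
    (F' := fun x z => gk d z • fderiv ℝ f (x + Real.sqrt t • z))
    (bound := fun z => C * gk d z) Filter.univ_mem
    (Filter.Eventually.of_forall fun y => (Continuous.aestronglyMeasurable (by fun_prop)))
    (gk_comp_int hf _ x) (hm x) (Filter.Eventually.of_forall fun z y _ => hbd y z)
    ((gk_int d).const_mul C) (Filter.Eventually.of_forall fun z y _ => ?_)
  have h1 : HasFDerivAt (fun x => f (x + Real.sqrt t • z)) (fderiv ℝ f (y + Real.sqrt t • z)) y :=
    (hasFDerivAt_comp_add_right _).2 (hf.diff (y + Real.sqrt t • z)).hasFDerivAt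
  exact h1.const_mul (gk d z)

lemma heat_pd {d : ℕ} {f : EuclideanSpace ℝ (Fin d) → ℝ} (hf : Good f) {t : ℝ} (ht : 0 < t)
    (i : Fin d) (x : EuclideanSpace ℝ (Fin d)) :
    pderiv' i (heatS d t f) x = heatS d t (pderiv' i f) x := by
  obtain ⟨h1, h2⟩ := heat_hasFDeriv hf ht x
  rw [pderiv', h1.fderiv, ContinuousLinearMap.integral_apply h2, heat_eq d ht]
  rfl

lemma err_pd {d : ℕ} {f : EuclideanSpace ℝ (Fin d) → ℝ} (hf : Good f) {t : ℝ} (ht : 0 < t)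
    (i : Fin d) : pderiv' i (Err t f) = Err t (pderiv' i f) := by
  funext x
  have h1 := (heat_hasFDeriv hf ht x).1.differentiableAt
  have h2 := (hf.diff x)
  have h3 : ∀ j, DifferentiableAt ℝ (pderiv' j (pderiv' j f)) x := fun j => ((hf.pd j).pd j).diff x
  have h4 : HasFDerivAt (Err t f) (t⁻¹ • (fderiv ℝ (heatS d t f) x - fderiv ℝ f x)
      - ∑ j, fderiv ℝ (pderiv' j (pderiv' j f)) x) x := by
    have a := ((h1.hasFDerivAt.fun_sub h2.hasFDerivAt).const_mul t⁻¹).fun_sub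
      (HasFDerivAt.fun_sum (u := Finset.univ) fun j _ => (h3 j).hasFDerivAt)
    have e : Err t f = fun y => t⁻¹ * (heatS d t f y - f y) - ∑ j, pderiv' j (pderiv' j f) y := by
      funext y
      simp [Err, lap, div_eq_inv_mul]
    rw [e]; exact a
  have h5 := heat_pd hf ht i x
  have h6 : ∀ j, pderiv' i (pderiv' j (pderiv' j f)) x = pderiv' j (pderiv' j (pderiv' i f)) x := by
    intro j
    rw [pd_comm (hf.pd j) i j, pd_comm hf i j]
  unfold Err
  rw [← h5]
  simp only [lap, ← h6]
  change fderiv ℝ (Err t f) x _ = _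
  rw [h4.fderiv]
  simp [pderiv', div_eq_inv_mul]

lemma iter_pd {d : ℕ} {t : ℝ} (ht : 0 < t) (i : Fin d) (n : ℕ) :
    ∀ {f : EuclideanSpace ℝ (Fin d) → ℝ}, Good f →
    (pderiv' i)^[n] (Err t f) = Err t ((pderiv' i)^[n] f) := by
  induction n with
  | zero => intro f _; rfl
  | succ n ih =>
    intro f hf
    rw [Function.iterate_succ_apply, Function.iterate_succ_apply, err_pd hf ht, ih (hf.pd i)]

lemma iter_good {d : ℕ} (i : Fin d) (n : ℕ) :
    ∀ {f : EuclideanSpace ℝ (Fin d) → ℝ}, Good f → Good ((pderiv' i)^[n] f) := by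
  induction n with
  | zero => intro f hf; exact hf
  | succ n ih => intro f hf; rw [Function.iterate_succ_apply]; exact ih (hf.pd i)

lemma md_good {d : ℕ} (α : Fin d → ℕ) {f : EuclideanSpace ℝ (Fin d) → ℝ} (hf : Good f) :
    Good (mderiv α f) := by
  unfold mderiv
  induction List.finRange d with
  | nil => exact hf
  | cons i l ih => exact iter_good i _ ih

lemma md_err {d : ℕ} (α : Fin d → ℕ) {f : EuclideanSpace ℝ (Fin d) → ℝ} (hf : Good f) {t : ℝ}
    (ht : 0 < t) : mderiv α (Err t f) = Err t (mderiv α f) := by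
  unfold mderiv
  have : ∀ l : List (Fin d), Good (l.foldr (fun i g => (pderiv' i)^[α i] g) f) ∧
      l.foldr (fun i g => (pderiv' i)^[α i] g) (Err t f) =
        Err t (l.foldr (fun i g => (pderiv' i)^[α i] g) f) := by
    intro l
    induction l with
    | nil => exact ⟨hf, rfl⟩
    | cons i l ih =>
      refine ⟨iter_good i _ ih.1, ?_⟩
      rw [List.foldr_cons, List.foldr_cons, ih.2, iter_pd ht i _ ih.1]
  exact (this _).2

lemma jb_bound {d : ℕ} (δ : ℝ) (x : EuclideanSpace ℝ (Fin d)) :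
    jb x ^ δ ≤ (1 + ‖x‖) ^ ⌈|δ|⌉₊ := by
  have h1 : 1 ≤ jb x := Real.one_le_sqrt.2 (by nlinarith [sq_nonneg ‖x‖])
  have h2 : jb x ≤ 1 + ‖x‖ := by
    refine Real.sqrt_le_iff.2 ⟨by positivity, by nlinarith [norm_nonneg x]⟩
  calc jb x ^ δ ≤ jb x ^ ((⌈|δ|⌉₊ : ℕ) : ℝ) :=
        Real.rpow_le_rpow_of_exponent_le h1 ((le_abs_self δ).trans (Nat.le_ceil _))
    _ = jb x ^ ⌈|δ|⌉₊ := Real.rpow_natCast _ _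
    _ ≤ _ := pow_le_pow_left₀ (by linarith) h2 _

lemma memLp_w (d : ℕ) {p : ℝ} (hp : 1 < p) :
    MemLp (fun x : EuclideanSpace ℝ (Fin d) => ((1 + ‖x‖) ^ (d + 1))⁻¹) (ENNReal.ofReal p) volume := by
  have hc : Continuous (fun x : EuclideanSpace ℝ (Fin d) => ((1 + ‖x‖) ^ (d + 1))⁻¹) :=
    Continuous.inv₀ (by fun_prop) (fun x => by positivity)
  rw [← integrable_norm_rpow_iff hc.aestronglyMeasurable
    (by simpa using (by linarith : 0 < p)) ENNReal.ofReal_ne_top]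
  have := integrable_one_add_norm (E := EuclideanSpace ℝ (Fin d)) (μ := volume)
    (r := ((d + 1 : ℕ) : ℝ) * p) (by
      simp only [finrank_euclideanSpace, Fintype.card_fin]; push_cast
      have : (0 : ℝ) ≤ d := by positivity
      nlinarith)
  refine this.congr (Filter.Eventually.of_forall fun x => ?_)
  have hx : 0 ≤ 1 + ‖x‖ := by positivity
  simp only
  rw [ENNReal.toReal_ofReal (by linarith), Real.norm_of_nonneg (by positivity),
    Real.inv_rpow (by positivity), Real.rpow_neg hx, Real.rpow_mul hx, Real.rpow_natCast]

lemma wLp_tendsto {d : ℕ} {p : ℝ} (hp : 1 < p) (δ : ℝ) {f : EuclideanSpace ℝ (Fin d) → ℝ}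
    (hf : Good f) :
    Filter.Tendsto (fun t => wLp p δ (Err t f)) (nhdsWithin 0 (Set.Ioi 0)) (nhds 0) := by
  obtain ⟨K, hK, hb⟩ := err_bound hf (⌈|δ|⌉₊ + (d + 1))
  have hw := memLp_w d hp
  set w := fun x : EuclideanSpace ℝ (Fin d) => ((1 + ‖x‖) ^ (d + 1))⁻¹ with hwdef
  have hlim : Filter.Tendsto
      (fun t => K * Real.sqrt t * (eLpNorm w (ENNReal.ofReal p) volume).toReal)
      (nhdsWithin 0 (Set.Ioi 0)) (nhds 0) := by
    have : Continuous (fun t => K * Real.sqrt t * (eLpNorm w (ENNReal.ofReal p) volume).toReal) := by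
      fun_prop
    have h0 := this.tendsto 0
    simp only [Real.sqrt_zero, mul_zero, zero_mul] at h0
    exact h0.mono_left nhdsWithin_le_nhds
  refine squeeze_zero' (Filter.Eventually.of_forall fun t => ENNReal.toReal_nonneg) ?_ hlim
  have hI : Set.Ioc (0 : ℝ) 1 ∈ nhdsWithin (0 : ℝ) (Set.Ioi 0) := Ioc_mem_nhdsGT one_pos
  filter_upwards [hI] with t ht
  have hle : eLpNorm (fun x => jb x ^ δ • Err t f x) (ENNReal.ofReal p) volume ≤
      eLpNorm ((K * Real.sqrt t) • w) (ENNReal.ofReal p) volume := by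
    refine eLpNorm_mono_real fun x => ?_
    have hj : 0 ≤ jb x ^ δ := Real.rpow_nonneg (Real.sqrt_nonneg _) _
    rw [norm_smul, Real.norm_of_nonneg hj, Real.norm_eq_abs, Pi.smul_apply, smul_eq_mul, hwdef]
    simp only
    rw [← div_eq_mul_inv, le_div_iff₀ (by positivity)]
    calc jb x ^ δ * |Err t f x| * (1 + ‖x‖) ^ (d + 1)
        ≤ (1 + ‖x‖) ^ ⌈|δ|⌉₊ * |Err t f x| * (1 + ‖x‖) ^ (d + 1) := by
          gcongr; exact jb_bound δ x
      _ = (1 + ‖x‖) ^ (⌈|δ|⌉₊ + (d + 1)) * |Err t f x| := by rw [pow_add]; ring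
      _ ≤ _ := hb t ht.1 ht.2 x
  rw [eLpNorm_const_smul] at hle
  have := ENNReal.toReal_mono (ENNReal.mul_ne_top enorm_ne_top hw.eLpNorm_ne_top) hle
  rw [ENNReal.toReal_mul, toReal_enorm, Real.norm_of_nonneg (by positivity)] at this
  exact this

/-- The Laplacian is the generator of the heat semigroup on the weighted Sobolev space:
for smooth compactly supported `v`, `(S(t)v − v)/t → Δv` in `H^{m,p}_δ` as `t → 0⁺`. -/
theorem stmt4 (d : ℕ) (hd : 1 ≤ d) (p : ℝ) (hp : 1 < p) (m : ℕ) (δ : ℝ)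
    (v : EuclideanSpace ℝ (Fin d) → ℝ) (hv : ContDiff ℝ (⊤ : ℕ∞) v) (hv' : HasCompactSupport v) :
    Filter.Tendsto
      (fun t : ℝ => Hnorm d m p δ (fun x => (heatS d t v x - v x) / t - lap v x))
      (nhdsWithin 0 (Set.Ioi 0)) (nhds 0) := by
  have hg : Good v := ⟨hv, hv'⟩
  unfold Hnorm
  have h0 : (0 : ℝ) = ∑ α ∈ Finset.univ.filter
    (fun α : Fin d → Fin (m + 1) => ∑ i, (α i : ℕ) ≤ m), (0 : ℝ) := by simp
  rw [show nhds (0 : ℝ) = nhds (∑ α ∈ Finset.univ.filter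
    (fun α : Fin d → Fin (m + 1) => ∑ i, (α i : ℕ) ≤ m), (0 : ℝ)) from congrArg nhds h0]
  refine tendsto_finsetSum _ fun α _ => ?_
  refine (wLp_tendsto hp δ (md_good (fun i => (α i : ℕ)) hg)).congr' ?_
  filter_upwards [self_mem_nhdsWithin] with t ht
  rw [← md_err _ hg ht]
  rfl
end

section
/- Let d ≥ 1, 1 < p < ∞ and δ ∈ ℝ. There exists a constant C > 0 such that for every g ∈ C_c^∞(ℝ^d), ‖g‖_{H^{2,p}_δ} ≤ C · ( ‖⟨·⟩^δ Δg‖_{L^p(ℝ^d)} + ‖⟨·⟩^δ g‖_{L^p(ℝ^d)} ). -/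
open MeasureTheory

abbrev EE (d : ℕ) := EuclideanSpace ℝ (Fin d)

lemma hda_of {f g : ℝ → ℝ} {a b t : ℝ} (h : HasDerivAt f a t) (hf : ∀ t, g t = f t) (hab : b = a) :
    HasDerivAt g b t := by
  have : g = f := funext hf
  rw [this, hab]; exact h

/-- smooth compactly supported -/
def CCS {d : ℕ} (f : EE d → ℝ) : Prop := ContDiff ℝ (⊤ : ℕ∞) f ∧ HasCompactSupport f

noncomputable abbrev ev {d : ℕ} (i : Fin d) : EE d := EuclideanSpace.single i (1 : ℝ)

namespace CCS
variable {d : ℕ} {f g : EE d → ℝ}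

lemma continuous (hf : CCS f) : Continuous f := hf.1.continuous

lemma differentiable (hf : CCS f) : Differentiable ℝ f := hf.1.differentiable (by simp)

lemma pderiv (hf : CCS f) (i : Fin d) : CCS (pderiv' i f) := by
  constructor
  · unfold pderiv'
    have : ContDiff ℝ (⊤ : ℕ∞) (fderiv ℝ f) := hf.1.fderiv_right (by simp)
    exact this.clm_apply contDiff_const
  · exact hf.2.fderiv_apply ℝ _

lemma lap (hf : CCS f) : CCS (lap f) := by
  constructor
  · unfold _root_.lap
    exact ContDiff.sum fun i _ => ((hf.pderiv i).pderiv i).1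
  · have : ∀ s : Finset (Fin d), HasCompactSupport (fun x => ∑ i ∈ s, pderiv' i (pderiv' i f) x) := by
      intro s
      classical
      induction s using Finset.induction_on with
      | empty => exact HasCompactSupport.zero
      | insert a s ha ih =>
        simp only [Finset.sum_insert ha]
        exact ((hf.pderiv a).pderiv a).2.add ih
    exact this _

lemma mul (hf : CCS f) (hg : ContDiff ℝ (⊤ : ℕ∞) g) : CCS (fun x => g x * f x) :=
  ⟨hg.mul hf.1, hf.2.mul_left⟩

lemma deriv_line (hf : CCS f) (x v : EE d) (t : ℝ) :
    HasDerivAt (fun t : ℝ => f (x + t • v)) (fderiv ℝ f (x + t • v) v) t := by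
  have h1 : HasDerivAt (fun t : ℝ => x + t • v) v t := by
    simpa using ((hasDerivAt_id t).smul_const v).const_add x
  exact (hf.differentiable _).hasFDerivAt.comp_hasDerivAt t h1

lemma comm (hf : CCS f) (i j : Fin d) : pderiv' i (pderiv' j f) = pderiv' j (pderiv' i f) := by
  have hd : ∀ (k l : Fin d) x, pderiv' k (pderiv' l f) x = fderiv ℝ (fderiv ℝ f) x (ev k) (ev l) := by
    intro k l x
    unfold pderiv'
    have h2 : DifferentiableAt ℝ (fderiv ℝ f) x :=
      ((hf.1.fderiv_right (m := (⊤ : ℕ∞)) (by simp)).differentiable (by simp)) x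
    rw [fderiv_clm_apply h2 (by fun_prop)]
    simp
  funext x
  rw [hd, hd]
  have : IsSymmSndFDerivAt ℝ f x := by
    apply ContDiffAt.isSymmSndFDerivAt (n := (⊤ : ℕ∞)) hf.1.contDiffAt
    simp only [minSmoothness_of_isRCLikeNormedField]
    exact WithTop.coe_le_coe.2 (le_top : (2 : ℕ∞) ≤ ⊤)
  exact this _ _

lemma decay (hf : CCS f) : ∃ C : ℝ, 0 ≤ C ∧ ∀ x, |f x| ≤ C * ((1 + ‖x‖) ^ (d + 1))⁻¹ := by
  have hc : Continuous (fun x => (1 + ‖x‖) ^ (d + 1) * f x) := by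
    have := hf.continuous; fun_prop
  obtain ⟨C, hC⟩ := (hf.2.mul_left (f := fun x => (1 + ‖x‖) ^ (d + 1))).exists_bound_of_continuous hc
  refine ⟨C, (norm_nonneg _).trans (hC 0), fun x => ?_⟩
  have h := hC x
  have h1 : 0 < (1 + ‖x‖) ^ (d + 1) := by positivity
  rw [Real.norm_eq_abs, Pi.mul_apply, abs_mul, abs_of_pos h1] at h
  rw [← div_eq_mul_inv, le_div_iff₀ h1]; linarith

end CCS

lemma dec_integrable (d : ℕ) : Integrable (fun x : EE d => ((1 + ‖x‖) ^ (d + 1))⁻¹) := by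
  have := integrable_one_add_norm (E := EE d) (μ := volume) (r := d + 1) (by simp)
  refine this.congr (Filter.Eventually.of_forall fun x => ?_)
  have h1 : 0 < (1 + ‖x‖) := by positivity
  simp only
  rw [Real.rpow_neg h1.le]
  congr 1
  exact_mod_cast Real.rpow_natCast _ _

/-- continuous and decaying -/
def Dec {d : ℕ} (f : EE d → ℝ) : Prop :=
  Continuous f ∧ ∃ C : ℝ, 0 ≤ C ∧ ∀ x, |f x| ≤ C * ((1 + ‖x‖) ^ (d + 1))⁻¹

lemma dec_le_one {d : ℕ} (x : EE d) : ((1 + ‖x‖) ^ (d + 1))⁻¹ ≤ 1 := by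
  apply inv_le_one_of_one_le₀
  apply one_le_pow₀
  linarith [norm_nonneg x]

lemma dec_pos {d : ℕ} (x : EE d) : 0 < ((1 + ‖x‖) ^ (d + 1))⁻¹ := by positivity

namespace Dec
variable {d : ℕ} {f g : EE d → ℝ}

lemma integrable (hf : Dec f) : Integrable f := by
  obtain ⟨hc, C, _, h⟩ := hf
  exact ((dec_integrable d).const_mul C).mono' hc.aestronglyMeasurable
    (Filter.Eventually.of_forall h)

lemma bdd (hf : Dec f) : ∃ C : ℝ, 0 ≤ C ∧ ∀ x, |f x| ≤ C := by
  obtain ⟨hc, C, hC, h⟩ := hf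
  exact ⟨C, hC, fun x => (h x).trans (mul_le_of_le_one_right hC (dec_le_one x))⟩

lemma bmul (hf : Dec f) (hg : Continuous g) {A : ℝ} (hA : ∀ x, |g x| ≤ A) :
    Dec (fun x => g x * f x) := by
  obtain ⟨hc, C, hC, h⟩ := hf
  have hA0 : 0 ≤ A := (abs_nonneg _).trans (hA 0)
  refine ⟨hg.mul hc, A * C, by positivity, fun x => ?_⟩
  rw [abs_mul, mul_assoc]
  exact mul_le_mul (hA x) (h x) (abs_nonneg _) hA0

lemma mul (hf : Dec f) (hg : Dec g) : Dec (fun x => g x * f x) := by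
  obtain ⟨A, _, hA⟩ := hg.bdd
  exact hf.bmul hg.1 hA

lemma add (hf : Dec f) (hg : Dec g) : Dec (fun x => f x + g x) := by
  obtain ⟨hc, C, hC, h⟩ := hf
  obtain ⟨hc', C', hC', h'⟩ := hg
  refine ⟨hc.add hc', C + C', by positivity, fun x => ?_⟩
  rw [add_mul]
  exact (abs_add_le _ _).trans (add_le_add (h x) (h' x))

lemma const_mul (hf : Dec f) (c : ℝ) : Dec (fun x => c * f x) :=
  hf.bmul (g := fun _ => c) continuous_const (A := |c|) (fun _ => le_rfl)

lemma zero : Dec (fun _ : EE d => (0 : ℝ)) := ⟨continuous_const, 0, le_rfl, by simp⟩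

lemma sum {ι : Type*} (s : Finset ι) {F : ι → EE d → ℝ} (h : ∀ i ∈ s, Dec (F i)) :
    Dec (fun x => ∑ i ∈ s, F i x) := by
  classical
  induction s using Finset.induction_on with
  | empty => simpa using Dec.zero
  | insert a s ha ih =>
    simp only [Finset.sum_insert ha]
    exact (h a (by simp)).add (ih fun i hi => h i (by simp [hi]))

lemma abs (hf : Dec f) : Dec (fun x => |f x|) := by
  obtain ⟨hc, C, hC, h⟩ := hf
  exact ⟨hc.abs, C, hC, by simpa using h⟩

end Dec

lemma CCS.dec {d : ℕ} {f : EE d → ℝ} (hf : CCS f) : Dec f := ⟨hf.continuous, hf.decay⟩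

/-- integral of a directional derivative vanishes -/
lemma integral_lineDeriv_zero {d : ℕ} {f f' : EE d → ℝ} {v : EE d} (hf : Integrable f)
    (hf' : Integrable f')
    (h : ∀ x, HasDerivAt (fun t : ℝ => f (x + t • v)) (f' x) 0) : ∫ x, f' x = 0 := by
  have := integral_bilinear_hasLineDerivAt_right_eq_neg_left_of_integrable (μ := volume)
    (f := fun _ : EE d => (1 : ℝ)) (f' := fun _ => 0) (g := f) (g' := f') (v := v)
    (B := ContinuousLinearMap.mul ℝ ℝ) (by simp) (by simpa using hf') (by simpa using hf)
    (fun x _ => by simpa [HasLineDerivAt] using hasDerivAt_const (0:ℝ) (1:ℝ))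
    (fun x _ => h x)
  simpa using this

lemma ibp_line {d : ℕ} {f f' g g' : EE d → ℝ} {v : EE d}
    (h1 : Integrable (fun x => f' x * g x)) (h2 : Integrable (fun x => f x * g' x))
    (h3 : Integrable (fun x => f x * g x))
    (hf : ∀ x, HasDerivAt (fun t : ℝ => f (x + t • v)) (f' x) 0)
    (hg : ∀ x, HasDerivAt (fun t : ℝ => g (x + t • v)) (g' x) 0) :
    ∫ x, f x * g' x = - ∫ x, f' x * g x :=
  integral_bilinear_hasLineDerivAt_right_eq_neg_left_of_integrable (μ := volume)
    (B := ContinuousLinearMap.mul ℝ ℝ) h1 h2 h3 (fun x _ => hf x) (fun x _ => hg x)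


/-- standard Gaussian density -/
noncomputable def gam {d : ℕ} (z : EE d) : ℝ :=
  (∫ w : EE d, Real.exp (-(1 / 2) * ‖w‖ ^ 2))⁻¹ * Real.exp (-(1 / 2) * ‖z‖ ^ 2)

lemma gauss_int (d : ℕ) {b : ℝ} (hb : 0 < b) :
    Integrable (fun z : EE d => Real.exp (-b * ‖z‖ ^ 2)) := by
  by_contra h
  have h1 := GaussianFourier.integral_rexp_neg_mul_sq_norm (V := EE d) hb
  rw [integral_undef h] at h1
  have : 0 < (Real.pi / b) ^ (Module.finrank ℝ (EE d) / 2 : ℝ) := by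
    have := Real.pi_pos
    positivity
  linarith

lemma gauss_pos (d : ℕ) : 0 < ∫ w : EE d, Real.exp (-(1 / 2) * ‖w‖ ^ 2) := by
  rw [GaussianFourier.integral_rexp_neg_mul_sq_norm (V := EE d) (by norm_num)]
  have := Real.pi_pos
  positivity

lemma gam_pos {d : ℕ} (z : EE d) : 0 < gam z := by
  have := gauss_pos d
  unfold gam
  positivity

lemma gam_one (d : ℕ) : ∫ z : EE d, gam z = 1 := by
  unfold gam
  rw [integral_const_mul, inv_mul_cancel₀ (gauss_pos d).ne']

lemma gam_cont (d : ℕ) : Continuous (gam (d := d)) := by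
  unfold gam
  fun_prop

lemma gam_mom (d n : ℕ) : Integrable (fun z : EE d => (1 + ‖z‖) ^ n * gam z) := by
  have hp := gauss_pos d
  have h := (gauss_int d (b := 1 / 4) (by norm_num)).const_mul
    ((∫ w : EE d, Real.exp (-(1 / 2) * ‖w‖ ^ 2))⁻¹ * (n.factorial * Real.exp 2))
  refine h.mono' ?_ (Filter.Eventually.of_forall fun z => ?_)
  · have := gam_cont d
    exact Continuous.aestronglyMeasurable (by fun_prop)
  · have hg := gam_pos z
    rw [Real.norm_of_nonneg (by positivity)]
    unfold gam
    have h1 : (1 + ‖z‖) ^ n ≤ n.factorial * Real.exp (1 + ‖z‖) := by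
      have := Real.pow_div_factorial_le_exp (1 + ‖z‖) (by positivity) n
      rwa [div_le_iff₀ (by positivity), mul_comm] at this
    have h2 : Real.exp (1 + ‖z‖) * Real.exp (-(1 / 2) * ‖z‖ ^ 2) ≤
        Real.exp 2 * Real.exp (-(1 / 4) * ‖z‖ ^ 2) := by
      rw [← Real.exp_add, ← Real.exp_add]
      apply Real.exp_le_exp.2
      nlinarith [sq_nonneg (‖z‖ - 2)]
    have hI : 0 ≤ (∫ w : EE d, Real.exp (-(1 / 2) * ‖w‖ ^ 2))⁻¹ := by positivity
    calc (1 + ‖z‖) ^ n * ((∫ w : EE d, Real.exp (-(1 / 2) * ‖w‖ ^ 2))⁻¹ *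
          Real.exp (-(1 / 2) * ‖z‖ ^ 2))
        ≤ (n.factorial * Real.exp (1 + ‖z‖)) * ((∫ w : EE d, Real.exp (-(1 / 2) * ‖w‖ ^ 2))⁻¹ *
          Real.exp (-(1 / 2) * ‖z‖ ^ 2)) := by gcongr
      _ = (∫ w : EE d, Real.exp (-(1 / 2) * ‖w‖ ^ 2))⁻¹ * n.factorial *
          (Real.exp (1 + ‖z‖) * Real.exp (-(1 / 2) * ‖z‖ ^ 2)) := by ring
      _ ≤ (∫ w : EE d, Real.exp (-(1 / 2) * ‖w‖ ^ 2))⁻¹ * n.factorial *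
          (Real.exp 2 * Real.exp (-(1 / 4) * ‖z‖ ^ 2)) := by gcongr
      _ = _ := by ring

lemma gam_int (d : ℕ) : Integrable (gam (d := d)) := by
  simpa using gam_mom d 0

lemma gam_deriv {d : ℕ} (k : Fin d) (z : EE d) :
    HasDerivAt (fun t : ℝ => gam (z + t • ev k)) (-(z k) * gam z) 0 := by
  have h1 : ∀ t : ℝ, ‖z + t • ev k‖ ^ 2 = ‖z‖ ^ 2 + 2 * t * z k + t ^ 2 := by
    intro t
    rw [norm_add_sq_real, inner_smul_right, norm_smul]
    have h0 : inner ℝ z (ev k) = z k := by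
      rw [EuclideanSpace.inner_single_right]; simp
    rw [h0]
    simp [ev]
    ring
  unfold gam
  simp only [h1]
  have h2 : HasDerivAt (fun t : ℝ => -(1 / 2) * (‖z‖ ^ 2 + 2 * t * z k + t ^ 2)) (-(z k)) 0 := by
    have := (((((hasDerivAt_id (0:ℝ)).const_mul 2).mul_const (z k)).const_add (‖z‖ ^ 2)).add
      ((hasDerivAt_id (0:ℝ)).pow 2)).const_mul (-(1 / 2 : ℝ))
    refine hda_of this (fun t => ?_) ?_
    · simp
    · simp
  have h3 := (h2.exp).const_mul (∫ w : EE d, Real.exp (-(1 / 2) * ‖w‖ ^ 2))⁻¹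
  refine hda_of h3 (fun t => rfl) ?_
  norm_num
  ring

/-- heat flow, parametrised by the standard deviation `s` -/
noncomputable def heat {d : ℕ} (s : ℝ) (f : EE d → ℝ) (x : EE d) : ℝ :=
  ∫ z, f (x + s • z) * gam z

section heat
variable {d : ℕ} {f : EE d → ℝ}

lemma heat_integrand (hf : Dec f) (s : ℝ) (x : EE d) :
    Integrable (fun z => f (x + s • z) * gam z) := by
  obtain ⟨C, hC, h⟩ := hf.bdd
  refine ((gam_int d).const_mul C).mono' ?_ (Filter.Eventually.of_forall fun z => ?_)
  · have := gam_cont d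
    have := hf.1
    exact Continuous.aestronglyMeasurable (by fun_prop)
  · rw [Real.norm_eq_abs, abs_mul, abs_of_pos (gam_pos z)]
    exact mul_le_mul_of_nonneg_right (h _) (gam_pos z).le

lemma heat_zero (f : EE d → ℝ) : heat 0 f = f := by
  funext x
  simp [heat, integral_const_mul, gam_one]

lemma heat_decay (hf : Dec f) {S : ℝ} (hS : 1 ≤ S) : ∃ C : ℝ, 0 ≤ C ∧
    ∀ s, |s| ≤ S → ∀ x, |heat s f x| ≤ C * ((1 + ‖x‖) ^ (d + 1))⁻¹ := by
  obtain ⟨hc, C, hC, h⟩ := hf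
  set M := ∫ z : EE d, (1 + ‖z‖) ^ (d + 1) * gam z with hM
  have hM0 : 0 ≤ M := integral_nonneg fun z => mul_nonneg (by positivity) (gam_pos z).le
  refine ⟨C * S ^ (d + 1) * M, by positivity, fun s hs x => ?_⟩
  have hb : ∀ z, ‖f (x + s • z) * gam z‖ ≤
      (C * S ^ (d + 1) * ((1 + ‖x‖) ^ (d + 1))⁻¹) * ((1 + ‖z‖) ^ (d + 1) * gam z) := by
    intro z
    rw [norm_mul, Real.norm_of_nonneg (gam_pos z).le, ← mul_assoc]
    refine mul_le_mul_of_nonneg_right ?_ (gam_pos z).le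
    have h1 : 1 + ‖x‖ ≤ (1 + ‖x + s • z‖) * (S * (1 + ‖z‖)) := by
      have h2 : ‖x‖ ≤ ‖x + s • z‖ + S * ‖z‖ := by
        have : x = (x + s • z) - s • z := by abel
        calc ‖x‖ = ‖(x + s • z) - s • z‖ := by rw [← this]
          _ ≤ ‖x + s • z‖ + ‖s • z‖ := norm_sub_le _ _
          _ ≤ _ := by
            rw [norm_smul]
            gcongr
            exact hs
      have h3 : 0 ≤ ‖x + s • z‖ := norm_nonneg _
      have h4 : 0 ≤ ‖z‖ := norm_nonneg _
      nlinarith [mul_nonneg h3 h4, mul_nonneg (sub_nonneg.2 hS) h3,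
        mul_nonneg (mul_nonneg h3 h4) (by linarith : 0 ≤ S)]
    have h5 : (1 + ‖x‖) ^ (d + 1) ≤
        (1 + ‖x + s • z‖) ^ (d + 1) * (S ^ (d + 1) * (1 + ‖z‖) ^ (d + 1)) := by
      rw [← mul_pow, ← mul_pow]
      gcongr
    refine (h _).trans ?_
    rw [mul_assoc, mul_assoc]
    refine mul_le_mul_of_nonneg_left ?_ hC
    have hx : 0 < (1 + ‖x‖) ^ (d + 1) := by positivity
    have hxz : 0 < (1 + ‖x + s • z‖) ^ (d + 1) := by positivity
    rw [inv_le_iff_one_le_mul₀ hxz]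
    have : (S ^ (d + 1) * (((1 + ‖x‖) ^ (d + 1))⁻¹ * (1 + ‖z‖) ^ (d + 1))) *
        (1 + ‖x + s • z‖) ^ (d + 1) = ((1 + ‖x + s • z‖) ^ (d + 1) *
        (S ^ (d + 1) * (1 + ‖z‖) ^ (d + 1))) / (1 + ‖x‖) ^ (d + 1) := by
      field_simp
    rw [this, le_div_iff₀ hx]; linarith
  have h2 := norm_integral_le_of_norm_le
    ((gam_mom d (d + 1)).const_mul (C * S ^ (d + 1) * ((1 + ‖x‖) ^ (d + 1))⁻¹))
    (Filter.Eventually.of_forall hb)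
  rw [integral_const_mul] at h2
  refine h2.trans (le_of_eq ?_)
  rw [← hM]; ring

lemma heat_cont (hf : Dec f) (s : ℝ) : Continuous (heat s f) := by
  obtain ⟨C, hC, h⟩ := hf.bdd
  have h1 := gam_cont d
  have h2 := hf.1
  unfold heat
  refine continuous_of_dominated (bound := fun z => C * gam z) (fun x => ?_) (fun x => ?_)
    ((gam_int d).const_mul C) (Filter.Eventually.of_forall fun z => by fun_prop)
  · exact Continuous.aestronglyMeasurable (by fun_prop)
  · refine Filter.Eventually.of_forall fun z => ?_
    rw [Real.norm_eq_abs, abs_mul, abs_of_pos (gam_pos z)]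
    exact mul_le_mul_of_nonneg_right (h _) (gam_pos z).le

lemma heat_dec (hf : Dec f) (s : ℝ) : Dec (heat s f) := by
  obtain ⟨C, hC, h⟩ := heat_decay hf (S := max 1 |s|) (le_max_left _ _)
  exact ⟨heat_cont hf s, C, hC, h s (le_max_right _ _)⟩

lemma heat_dx (hf : CCS f) (s : ℝ) (x : EE d) (k : Fin d) :
    HasDerivAt (fun t : ℝ => heat s f (x + t • ev k)) (heat s (pderiv' k f) x) 0 := by
  obtain ⟨C, hC, h⟩ := (hf.pderiv k).dec.bdd
  have h1 := gam_cont d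
  have h2 := hf.continuous
  have h3 := (hf.pderiv k).continuous
  have key := hasDerivAt_integral_of_dominated_loc_of_deriv_le (μ := (volume : Measure (EE d)))
    (F := fun (t : ℝ) z => f (x + t • ev k + s • z) * gam z)
    (F' := fun (t : ℝ) z => pderiv' k f (x + t • ev k + s • z) * gam z) (x₀ := (0:ℝ))
    (s := Set.univ) (bound := fun z => C * gam z) Filter.univ_mem
    (Filter.Eventually.of_forall fun t => Continuous.aestronglyMeasurable (by fun_prop))
    (heat_integrand hf.dec s _)
    (Continuous.aestronglyMeasurable (by fun_prop))
    (Filter.Eventually.of_forall fun z t _ => by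
      rw [Real.norm_eq_abs, abs_mul, abs_of_pos (gam_pos z)]
      exact mul_le_mul_of_nonneg_right (h _) (gam_pos z).le)
    ((gam_int d).const_mul C)
    (Filter.Eventually.of_forall fun z t _ => by
      apply HasDerivAt.mul_const
      have := hf.deriv_line (x + s • z) (ev k) t
      unfold pderiv'
      refine hda_of this (fun t => ?_) ?_
      · congr 1; abel
      · congr 2; abel)
  refine hda_of key.2 (fun t => rfl) ?_
  simp [heat]

lemma fderiv_sum' (f : EE d → ℝ) (y z : EE d) : fderiv ℝ f y z = ∑ k, z k * pderiv' k f y := by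
  have : z = ∑ k, z k • ev k := by
    ext i
    simp [ev, Finset.sum_apply, Pi.single_apply]
  conv_lhs => rw [this]
  rw [map_sum]
  simp [pderiv']

lemma heat_gibp (hf : CCS f) (s : ℝ) (x : EE d) (k : Fin d) :
    ∫ z, (z k * f (x + s • z)) * gam z = s * heat s (pderiv' k f) x := by
  have h1 := gam_cont d
  have h2 := hf.continuous
  obtain ⟨C, hC, h⟩ := hf.dec.bdd
  have key := ibp_line (f := fun z : EE d => f (x + s • z))
    (f' := fun z => s * pderiv' k f (x + s • z)) (g := gam) (g' := fun z => -(z k) * gam z)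
    (v := ev k)
    (by simpa [mul_assoc] using (heat_integrand (hf.pderiv k).dec s x).const_mul s)
    (by
      refine ((gam_mom d 1).const_mul C).mono' (Continuous.aestronglyMeasurable (by fun_prop))
        (Filter.Eventually.of_forall fun z => ?_)
      rw [norm_mul, norm_mul, norm_neg, Real.norm_of_nonneg (gam_pos z).le]
      have h3 : ‖z k‖ ≤ 1 + ‖z‖ := (PiLp.norm_apply_le z k).trans (by linarith)
      have h4 : ‖f (x + s • z)‖ ≤ C := h _
      have := (gam_pos z).le
      rw [pow_one]
      gcongr)
    (heat_integrand hf.dec s x)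
    (fun z => by
      have := (hf.deriv_line (x + s • z) (s • ev k) 0)
      refine hda_of this (fun t => ?_) ?_
      · congr 1; simp [smul_smul, mul_comm, add_assoc]
      · simp [pderiv'])
    (gam_deriv k)
  have h5 : ∫ z, (z k * f (x + s • z)) * gam z = -∫ z, f (x + s • z) * (-(z k) * gam z) := by
    rw [← integral_neg]
    congr 1; funext z; ring
  rw [h5, key, neg_neg, heat, ← integral_const_mul]
  congr 1; funext z; ring

lemma heat_ds (hf : CCS f) (s : ℝ) (x : EE d) :
    HasDerivAt (fun s : ℝ => heat s f x) (s * heat s (lap f) x) s := by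
  have h1 := gam_cont d
  have h2 := hf.continuous
  have h3 : Continuous (fderiv ℝ f) := (hf.1.fderiv_right (m := (⊤ : ℕ∞)) (by simp)).continuous
  obtain ⟨C, hCb⟩ := (hf.2.fderiv ℝ).exists_bound_of_continuous h3
  have hC : 0 ≤ C := (norm_nonneg _).trans (hCb 0)
  have key := hasDerivAt_integral_of_dominated_loc_of_deriv_le (μ := (volume : Measure (EE d)))
    (F := fun (t : ℝ) z => f (x + t • z) * gam z)
    (F' := fun (t : ℝ) z => fderiv ℝ f (x + t • z) z * gam z) (x₀ := s)
    (s := Set.univ) (bound := fun z => C * ((1 + ‖z‖) ^ 1 * gam z)) Filter.univ_mem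
    (Filter.Eventually.of_forall fun t => Continuous.aestronglyMeasurable (by fun_prop))
    (heat_integrand hf.dec s _)
    (Continuous.aestronglyMeasurable (by fun_prop))
    (Filter.Eventually.of_forall fun z t _ => by
      rw [norm_mul, Real.norm_of_nonneg (gam_pos z).le, pow_one, ← mul_assoc]
      refine mul_le_mul_of_nonneg_right ?_ (gam_pos z).le
      refine ((fderiv ℝ f (x + t • z)).le_opNorm z).trans ?_
      have := hCb (x + t • z)
      gcongr
      linarith)
    ((gam_mom d 1).const_mul C)
    (Filter.Eventually.of_forall fun z t _ => (hf.deriv_line x z t).mul_const _)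
  refine hda_of key.2 (fun t => rfl) ?_
  have hk : ∀ k, Integrable (fun z : EE d => (z k * pderiv' k f (x + s • z)) * gam z) := by
    intro k
    obtain ⟨C, hC, h⟩ := (hf.pderiv k).dec.bdd
    have h4 := (hf.pderiv k).continuous
    refine ((gam_mom d 1).const_mul C).mono' (Continuous.aestronglyMeasurable (by fun_prop))
        (Filter.Eventually.of_forall fun z => ?_)
    rw [norm_mul, norm_mul, Real.norm_of_nonneg (gam_pos z).le, ← mul_assoc, pow_one]
    refine mul_le_mul_of_nonneg_right ?_ (gam_pos z).le
    rw [mul_comm]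
    have h3 : ‖z k‖ ≤ 1 + ‖z‖ := (PiLp.norm_apply_le z k).trans (by linarith)
    exact mul_le_mul (h _) h3 (norm_nonneg _) hC
  simp only [fderiv_sum', Finset.sum_mul]
  rw [integral_finsetSum _ (fun k _ => hk k)]
  simp only [heat_gibp (hf.pderiv _)]
  rw [← Finset.mul_sum]
  congr 1
  unfold heat lap
  rw [← integral_finsetSum _ (fun k _ => heat_integrand ((hf.pderiv k).pderiv k).dec s x)]
  simp only [Finset.sum_mul]

lemma heat_inf (hf : CCS f) : ∃ C : ℝ, 0 ≤ C ∧ ∀ s : ℝ, 0 < s → ∀ x, |heat s f x| ≤ C * (s ^ d)⁻¹ := by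
  set A := (∫ w : EE d, Real.exp (-(1 / 2) * ‖w‖ ^ 2))⁻¹ with hA
  have hA0 : 0 ≤ A := by have := gauss_pos d; positivity
  have hg : ∀ z : EE d, gam z ≤ A := by
    intro z
    unfold gam
    refine mul_le_of_le_one_right hA0 ?_
    apply Real.exp_le_one_iff.2
    nlinarith [sq_nonneg ‖z‖]
  have hI : 0 ≤ ∫ x, |f x| := integral_nonneg fun x => abs_nonneg _
  refine ⟨A * ∫ x, |f x|, by positivity, fun s hs x => ?_⟩
  have h1 : ∫ z, |f (x + s • z)| = (s ^ d)⁻¹ * ∫ x, |f x| := by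
    have := Measure.integral_comp_smul (volume : Measure (EE d)) (fun z => |f (x + z)|) s
    rw [this, integral_add_left_eq_self (fun z => |f z|) x]
    simp [abs_of_pos hs]
  have hi : Integrable (fun z => |f (x + s • z)|) := by
    have h0 : Integrable (fun z => |f (x + z)|) := (hf.dec.abs.integrable).comp_add_left x
    exact h0.comp_smul hs.ne'
  have h2 := norm_integral_le_of_norm_le (f := fun z => f (x + s • z) * gam z) (hi.const_mul A)
    (Filter.Eventually.of_forall fun z => by
      rw [norm_mul, Real.norm_of_nonneg (gam_pos z).le, mul_comm]
      exact mul_le_mul_of_nonneg_right (hg z) (norm_nonneg _))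
  rw [integral_const_mul, h1] at h2
  refine h2.trans (le_of_eq (by ring))

end heat


noncomputable def Ph (a η u : ℝ) : ℝ := (u ^ 2 + η) ^ a
noncomputable def Ph1 (a η u : ℝ) : ℝ := 2 * a * u * (u ^ 2 + η) ^ (a - 1)
noncomputable def Ph2 (a η u : ℝ) : ℝ :=
  2 * a * (u ^ 2 + η) ^ (a - 1) + 4 * a * (a - 1) * u ^ 2 * (u ^ 2 + η) ^ (a - 2)

section Ph
variable {a η : ℝ}

lemma Ph_deriv (hη : 0 < η) {U : ℝ → ℝ} {U' t : ℝ} (hU : HasDerivAt U U' t) :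
    HasDerivAt (fun t => Ph a η (U t)) (Ph1 a η (U t) * U') t := by
  have h1 := ((hU.pow 2).add_const η).rpow_const (p := a)
    (Or.inl (by simp only [Pi.pow_apply]; positivity))
  refine hda_of h1 (fun t => ?_) ?_
  · simp [Ph]
  · simp [Ph1]; ring

lemma Ph1_deriv (hη : 0 < η) {U : ℝ → ℝ} {U' t : ℝ} (hU : HasDerivAt U U' t) :
    HasDerivAt (fun t => Ph1 a η (U t)) (Ph2 a η (U t) * U') t := by
  have h1 := ((hU.pow 2).add_const η).rpow_const (p := a - 1)
    (Or.inl (by simp only [Pi.pow_apply]; positivity))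
  have h2 := (hU.const_mul (2 * a)).mul h1
  refine hda_of h2 (fun t => ?_) ?_
  · simp [Ph1]
  · simp [Ph2]
    have : a - 1 - 1 = a - 2 := by ring
    rw [this]; ring

lemma Ph_pos (hη : 0 < η) (u : ℝ) : 0 < Ph a η u := by unfold Ph; positivity

lemma Ph_cont (hη : 0 < η) : Continuous (Ph a η) := by
  unfold Ph
  exact Continuous.rpow_const (by fun_prop) fun x => Or.inl (by positivity)

lemma Ph1_cont (hη : 0 < η) : Continuous (Ph1 a η) := by
  unfold Ph1
  exact Continuous.mul (by fun_prop) (Continuous.rpow_const (by fun_prop) fun x => Or.inl (by positivity))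

lemma Ph2_cont (hη : 0 < η) : Continuous (Ph2 a η) := by
  unfold Ph2
  exact (Continuous.mul (by fun_prop) (Continuous.rpow_const (by fun_prop)
    fun x => Or.inl (by positivity))).add
    (Continuous.mul (by fun_prop) (Continuous.rpow_const (by fun_prop) fun x => Or.inl (by positivity)))

lemma Ph1_sq (hη : 0 < η) (u : ℝ) :
    Ph1 a η u ^ 2 ≤ (2 * a) ^ 2 * ((u ^ 2 + η) ^ (a - 1) * Ph a η u) := by
  have hX : 0 < u ^ 2 + η := by positivity
  unfold Ph1 Ph
  have h1 : (u ^ 2 + η) ^ a = (u ^ 2 + η) ^ (a - 1) * (u ^ 2 + η) := by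
    rw [← Real.rpow_add_one hX.ne']; congr 1; ring
  rw [h1]
  have h2 : 0 ≤ (2 * a) ^ 2 * ((u ^ 2 + η) ^ (a - 1)) ^ 2 := by positivity
  nlinarith [mul_nonneg h2 hη.le]

lemma Ph2_ge1 (hη : 0 < η) (ha : 1 ≤ a) (u : ℝ) : 2 * a * (u ^ 2 + η) ^ (a - 1) ≤ Ph2 a η u := by
  unfold Ph2
  have : 0 ≤ 4 * a * (a - 1) * u ^ 2 * (u ^ 2 + η) ^ (a - 2) := by
    have h1 : 0 ≤ a - 1 := by linarith
    have h2 : 0 ≤ a := by linarith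
    positivity
  linarith

lemma Ph2_ge2 (hη : 0 < η) (ha0 : 0 < a) (ha : a ≤ 1) (u : ℝ) :
    2 * a * (2 * a - 1) * (u ^ 2 + η) ^ (a - 1) ≤ Ph2 a η u := by
  have hX : 0 < u ^ 2 + η := by positivity
  unfold Ph2
  have h1 : (u ^ 2 + η) ^ (a - 1) = (u ^ 2 + η) ^ (a - 2) * (u ^ 2 + η) := by
    rw [← Real.rpow_add_one hX.ne']; congr 1; ring
  rw [h1]
  have h2 : 0 ≤ (u ^ 2 + η) ^ (a - 2) := by positivity
  have h3 : 0 ≤ a * (1 - a) := mul_nonneg ha0.le (by linarith)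
  nlinarith [mul_nonneg (mul_nonneg h2 h3) hη.le]

end Ph

structure Bell where
  Q : ℝ → ℝ → ℝ
  Qu : ℝ → ℝ → ℝ
  Qv : ℝ → ℝ → ℝ
  Quu : ℝ → ℝ → ℝ
  Quv : ℝ → ℝ → ℝ
  Qvv : ℝ → ℝ → ℝ
  bt : ℝ → ℝ → ℝ
  cQ : Continuous (fun z : ℝ × ℝ => Q z.1 z.2)
  cQu : Continuous (fun z : ℝ × ℝ => Qu z.1 z.2)
  cQv : Continuous (fun z : ℝ × ℝ => Qv z.1 z.2)
  cQuu : Continuous (fun z : ℝ × ℝ => Quu z.1 z.2)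
  cQuv : Continuous (fun z : ℝ × ℝ => Quv z.1 z.2)
  cQvv : Continuous (fun z : ℝ × ℝ => Qvv z.1 z.2)
  dQ : ∀ (U V : ℝ → ℝ) (U' V' t : ℝ), HasDerivAt U U' t → HasDerivAt V V' t →
    HasDerivAt (fun t => Q (U t) (V t)) (Qu (U t) (V t) * U' + Qv (U t) (V t) * V') t
  dQu : ∀ (U V : ℝ → ℝ) (U' V' t : ℝ), HasDerivAt U U' t → HasDerivAt V V' t →
    HasDerivAt (fun t => Qu (U t) (V t)) (Quu (U t) (V t) * U' + Quv (U t) (V t) * V') t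
  dQv : ∀ (U V : ℝ → ℝ) (U' V' t : ℝ), HasDerivAt U U' t → HasDerivAt V V' t →
    HasDerivAt (fun t => Qv (U t) (V t)) (Quv (U t) (V t) * U' + Qvv (U t) (V t) * V') t
  btpos : ∀ u v, 0 < bt u v
  hess : ∀ u v A B, (bt u v)⁻¹ * A ^ 2 + bt u v * B ^ 2 ≤
    Quu u v * A ^ 2 + 2 * Quv u v * A * B + Qvv u v * B ^ 2
  qmin : ∀ u v, Q 0 0 ≤ Q u v

lemma hess_alg {K p q X S m u f1 f2 g1 g2 al be th A B : ℝ} (hp : 0 < p)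
    (hS : 0 < S) (hm : 0 < m) (hX : 0 < X) (hmX : m * X ≤ 1) (hu : u ^ 2 ≤ X)
    (hth0 : 0 ≤ th) (hth1 : th ≤ 1)
    (hal : 0 ≤ al) (hbe : 0 ≤ be)
    (hf1 : f1 ^ 2 ≤ p ^ 2 * (al * S)) (hg1 : g1 ^ 2 ≤ q ^ 2 * (be * S)) (huf : 0 ≤ u * f1)
    (hf2 : p * al ≤ f2) (hg2 : q * (q - 1) * be ≤ g2) (hg20 : 0 ≤ g2)
    (hK : 0 ≤ K) (hK1 : 2 * p ≤ K) (hK2 : 6 * q ^ 2 + 1 ≤ K * (q * (q - 1))) :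
    m * S * A ^ 2 + be * B ^ 2 ≤
      (K * f2 + 2 * (m * S) + 4 * u * th * m * f1 + X * th * (th - 1) * (m / S) * f1 ^ 2
        + X * th * m * f2) * A ^ 2
      + 2 * (2 * u * th * m * g1 + X * th * (th - 1) * (m / S) * f1 * g1) * A * B
      + (K * g2 + X * th * (th - 1) * (m / S) * g1 ^ 2 + X * th * m * g2) * B ^ 2 := by
  set T := f1 * A + g1 * B with hT
  have hf20 : 0 ≤ f2 := (mul_nonneg hp.le hal).trans hf2
  have e1 : (K * f2 + 2 * (m * S) + 4 * u * th * m * f1 + X * th * (th - 1) * (m / S) * f1 ^ 2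
        + X * th * m * f2) * A ^ 2
      + 2 * (2 * u * th * m * g1 + X * th * (th - 1) * (m / S) * f1 * g1) * A * B
      + (K * g2 + X * th * (th - 1) * (m / S) * g1 ^ 2 + X * th * m * g2) * B ^ 2
      = K * (f2 * A ^ 2 + g2 * B ^ 2) + 2 * (m * S) * A ^ 2 + 4 * th * m * (u * f1) * A ^ 2
        + 4 * u * th * m * g1 * A * B - (m * X) * (th * (1 - th)) * (T ^ 2 / S)
        + X * th * m * (f2 * A ^ 2 + g2 * B ^ 2) := by
    rw [hT]; field_simp; ring
  rw [e1]
  have a1 : K * (p * al) * A ^ 2 + K * (q * (q - 1) * be) * B ^ 2 ≤ K * (f2 * A ^ 2 + g2 * B ^ 2) := by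
    have h1 := mul_le_mul_of_nonneg_left hf2 hK
    have h2 := mul_le_mul_of_nonneg_left hg2 hK
    have h3 := mul_le_mul_of_nonneg_right h1 (sq_nonneg A)
    have h4 := mul_le_mul_of_nonneg_right h2 (sq_nonneg B)
    linarith
  have a2 : 0 ≤ 4 * th * m * (u * f1) * A ^ 2 := by positivity
  have a3 : 0 ≤ X * th * m * (f2 * A ^ 2 + g2 * B ^ 2) := by positivity
  have a4 : T ^ 2 / S ≤ 2 * p ^ 2 * al * A ^ 2 + 2 * q ^ 2 * be * B ^ 2 := by
    rw [div_le_iff₀ hS]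
    have h1 : T ^ 2 ≤ 2 * f1 ^ 2 * A ^ 2 + 2 * g1 ^ 2 * B ^ 2 := by
      have h0 := sq_nonneg (f1 * A - g1 * B)
      rw [hT]; linarith
    have h2 := mul_le_mul_of_nonneg_right hf1 (sq_nonneg A)
    have h3 := mul_le_mul_of_nonneg_right hg1 (sq_nonneg B)
    linarith
  have a5 : (m * X) * (th * (1 - th)) * (T ^ 2 / S) ≤ T ^ 2 / S := by
    have h0 : 0 ≤ T ^ 2 / S := by positivity
    have h1 : th * (1 - th) ≤ 1 := mul_le_one₀ hth1 (by linarith) (by linarith)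
    have h2 : 0 ≤ th * (1 - th) := mul_nonneg hth0 (by linarith)
    have h3 : (m * X) * (th * (1 - th)) ≤ 1 := mul_le_one₀ hmX h2 h1
    exact mul_le_of_le_one_left h0 h3
  have a6 : -(m * S * A ^ 2 + 4 * q ^ 2 * be * B ^ 2) ≤ 4 * u * th * m * g1 * A * B := by
    have h1 : 0 ≤ m * S * (A + 2 * u * th * g1 / S * B) ^ 2 := by positivity
    have h2 : m * S * (A + 2 * u * th * g1 / S * B) ^ 2 = m * S * A ^ 2 + 4 * u * th * m * g1 * A * B
        + 4 * (m * u ^ 2) * th ^ 2 * (g1 ^ 2 / S) * B ^ 2 := by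
      field_simp; ring
    have h3 : g1 ^ 2 / S ≤ q ^ 2 * be := by
      rw [div_le_iff₀ hS]; linarith
    have h4 : m * u ^ 2 ≤ 1 := (mul_le_mul_of_nonneg_left hu hm.le).trans hmX
    have h5 : th ^ 2 ≤ 1 := pow_le_one₀ hth0 hth1
    have h6 : (m * u ^ 2) * th ^ 2 * (g1 ^ 2 / S) ≤ q ^ 2 * be := by
      have h7 : (m * u ^ 2) * th ^ 2 ≤ 1 := mul_le_one₀ h4 (sq_nonneg _) h5
      have h8 : 0 ≤ g1 ^ 2 / S := by positivity
      exact (mul_le_of_le_one_left h8 h7).trans h3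
    have h9 := mul_le_mul_of_nonneg_right h6 (sq_nonneg B)
    linarith
  have a7 : 2 * p ^ 2 * al * A ^ 2 ≤ K * (p * al) * A ^ 2 := by
    have : 0 ≤ p * al * A ^ 2 := by positivity
    have h1 := mul_le_mul_of_nonneg_right hK1 this
    linarith
  have a8 : (6 * q ^ 2 + 1) * be * B ^ 2 ≤ K * (q * (q - 1) * be) * B ^ 2 := by
    have : 0 ≤ be * B ^ 2 := by positivity
    have h1 := mul_le_mul_of_nonneg_right hK2 this
    linarith
  clear_value T
  linarith

section bellman

noncomputable def Sf (p q η u v : ℝ) : ℝ := Ph (p / 2) η u + Ph (q / 2) η v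

noncomputable def Qf (K p q η u v : ℝ) : ℝ :=
  K * Sf p q η u v + (u ^ 2 + η) * Sf p q η u v ^ (1 - 2 / p)

lemma Sf_deriv {p q η : ℝ} (hη : 0 < η) {U V : ℝ → ℝ} {U' V' t : ℝ}
    (hU : HasDerivAt U U' t) (hV : HasDerivAt V V' t) :
    HasDerivAt (fun t => Sf p q η (U t) (V t))
      (Ph1 (p / 2) η (U t) * U' + Ph1 (q / 2) η (V t) * V') t :=
  (Ph_deriv hη hU).add (Ph_deriv hη hV)

lemma Sf_pos {p q η : ℝ} (hη : 0 < η) (u v : ℝ) : 0 < Sf p q η u v :=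
  add_pos (Ph_pos hη _) (Ph_pos hη _)

lemma Sf_cont {p q η : ℝ} (hη : 0 < η) : Continuous (fun z : ℝ × ℝ => Sf p q η z.1 z.2) :=
  ((Ph_cont hη).comp continuous_fst).add ((Ph_cont hη).comp continuous_snd)

lemma Sp_cont {p q η : ℝ} (th : ℝ) (hη : 0 < η) :
    Continuous (fun z : ℝ × ℝ => Sf p q η z.1 z.2 ^ th) :=
  (Sf_cont hη).rpow_const fun z => Or.inl (Sf_pos hη _ _).ne'

lemma Sp_deriv {p q η : ℝ} (th : ℝ) (hη : 0 < η) {U V : ℝ → ℝ} {U' V' t : ℝ}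
    (hU : HasDerivAt U U' t) (hV : HasDerivAt V V' t) :
    HasDerivAt (fun t => Sf p q η (U t) (V t) ^ th)
      (th * Sf p q η (U t) (V t) ^ (th - 1) *
        (Ph1 (p / 2) η (U t) * U' + Ph1 (q / 2) η (V t) * V')) t := by
  refine hda_of ((Sf_deriv (p := p) (q := q) hη hU hV).rpow_const (p := th)
    (Or.inl (Sf_pos hη _ _).ne')) (fun t => rfl) ?_
  ring

lemma exX {η : ℝ} {U : ℝ → ℝ} {U' t : ℝ} (hU : HasDerivAt U U' t) :
    HasDerivAt (fun t => U t ^ 2 + η) (2 * U t * U') t := by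
  refine hda_of ((hU.pow 2).add_const η) (fun t => rfl) ?_
  simp

noncomputable def bell (K p q η : ℝ) (hp : 2 ≤ p) (hq1 : 1 < q) (hpq : 1 / p + 1 / q = 1)
    (hη : 0 < η) (hK1 : 2 * p ≤ K) (hK2 : 6 * q ^ 2 + 1 ≤ K * (q * (q - 1))) : Bell where
  Q := Qf K p q η
  Qu u v := K * Ph1 (p / 2) η u + 2 * u * Sf p q η u v ^ (1 - 2 / p)
    + (u ^ 2 + η) * (1 - 2 / p) * Sf p q η u v ^ (1 - 2 / p - 1) * Ph1 (p / 2) η u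
  Qv u v := K * Ph1 (q / 2) η v
    + (u ^ 2 + η) * (1 - 2 / p) * Sf p q η u v ^ (1 - 2 / p - 1) * Ph1 (q / 2) η v
  Quu u v := K * Ph2 (p / 2) η u + 2 * Sf p q η u v ^ (1 - 2 / p)
    + 4 * u * (1 - 2 / p) * Sf p q η u v ^ (1 - 2 / p - 1) * Ph1 (p / 2) η u
    + (u ^ 2 + η) * (1 - 2 / p) * ((1 - 2 / p) - 1) * Sf p q η u v ^ (1 - 2 / p - 1 - 1)
      * Ph1 (p / 2) η u ^ 2
    + (u ^ 2 + η) * (1 - 2 / p) * Sf p q η u v ^ (1 - 2 / p - 1) * Ph2 (p / 2) η u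
  Quv u v := 2 * u * (1 - 2 / p) * Sf p q η u v ^ (1 - 2 / p - 1) * Ph1 (q / 2) η v
    + (u ^ 2 + η) * (1 - 2 / p) * ((1 - 2 / p) - 1) * Sf p q η u v ^ (1 - 2 / p - 1 - 1)
      * Ph1 (p / 2) η u * Ph1 (q / 2) η v
  Qvv u v := K * Ph2 (q / 2) η v
    + (u ^ 2 + η) * (1 - 2 / p) * ((1 - 2 / p) - 1) * Sf p q η u v ^ (1 - 2 / p - 1 - 1)
      * Ph1 (q / 2) η v ^ 2
    + (u ^ 2 + η) * (1 - 2 / p) * Sf p q η u v ^ (1 - 2 / p - 1) * Ph2 (q / 2) η v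
  bt _ v := (v ^ 2 + η) ^ (q / 2 - 1)
  cQ := by
    have := Sf_cont (p := p) (q := q) hη
    have := Sp_cont (p := p) (q := q) (1 - 2 / p) hη
    unfold Qf; fun_prop
  cQu := by
    have := Sp_cont (p := p) (q := q) (1 - 2 / p) hη
    have := Sp_cont (p := p) (q := q) (1 - 2 / p - 1) hη
    have := Ph1_cont (a := p / 2) hη
    fun_prop
  cQv := by
    have := Sp_cont (p := p) (q := q) (1 - 2 / p - 1) hη
    have := Ph1_cont (a := q / 2) hη
    fun_prop
  cQuu := by
    have := Sp_cont (p := p) (q := q) (1 - 2 / p) hη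
    have := Sp_cont (p := p) (q := q) (1 - 2 / p - 1) hη
    have := Sp_cont (p := p) (q := q) (1 - 2 / p - 1 - 1) hη
    have := Ph1_cont (a := p / 2) hη
    have := Ph2_cont (a := p / 2) hη
    fun_prop
  cQuv := by
    have := Sp_cont (p := p) (q := q) (1 - 2 / p - 1) hη
    have := Sp_cont (p := p) (q := q) (1 - 2 / p - 1 - 1) hη
    have := Ph1_cont (a := p / 2) hη
    have := Ph1_cont (a := q / 2) hη
    fun_prop
  cQvv := by
    have := Sp_cont (p := p) (q := q) (1 - 2 / p - 1) hη
    have := Sp_cont (p := p) (q := q) (1 - 2 / p - 1 - 1) hη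
    have := Ph1_cont (a := q / 2) hη
    have := Ph2_cont (a := q / 2) hη
    fun_prop
  dQ := by
    intro U V U' V' t hU hV
    refine hda_of (((Sf_deriv (p := p) (q := q) hη hU hV).const_mul K).add
      ((exX hU).mul (Sp_deriv (p := p) (q := q) (1 - 2 / p) hη hU hV))) (fun t => rfl) ?_
    ring
  dQu := by
    intro U V U' V' t hU hV
    refine hda_of ((((Ph1_deriv (a := p / 2) hη hU).const_mul K).add
      ((hU.const_mul 2).mul (Sp_deriv (p := p) (q := q) (1 - 2 / p) hη hU hV))).add
      ((((exX hU).mul_const (1 - 2 / p)).mul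
        (Sp_deriv (p := p) (q := q) (1 - 2 / p - 1) hη hU hV)).mul
          (Ph1_deriv (a := p / 2) hη hU))) (fun t => rfl) ?_
    simp only [Pi.mul_apply]
    ring
  dQv := by
    intro U V U' V' t hU hV
    refine hda_of (((Ph1_deriv (a := q / 2) hη hV).const_mul K).add
      ((((exX hU).mul_const (1 - 2 / p)).mul
        (Sp_deriv (p := p) (q := q) (1 - 2 / p - 1) hη hU hV)).mul
          (Ph1_deriv (a := q / 2) hη hV))) (fun t => rfl) ?_
    simp only [Pi.mul_apply]
    ring
  btpos u v := by positivity
  hess u v A B := by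
    have hp0 : 0 < p := by linarith
    have hq0 : 0 < q := by linarith
    have hXp : 0 < u ^ 2 + η := by positivity
    have hYp : 0 < v ^ 2 + η := by positivity
    have hS := Sf_pos (p := p) (q := q) hη u v
    set S := Sf p q η u v with hSd
    have hfS : Ph (p / 2) η u ≤ S := by
      have := Ph_pos (a := q / 2) hη v
      rw [hSd, Sf]; linarith
    have hgS : Ph (q / 2) η v ≤ S := by
      have := Ph_pos (a := p / 2) hη u
      rw [hSd, Sf]; linarith
    have hth0 : 0 ≤ 1 - 2 / p := by
      rw [sub_nonneg, div_le_one hp0]; exact hp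
    have hq2 : q ≤ 2 := by
      have h1 : 1 / p ≤ 1 / 2 := one_div_le_one_div_of_le (by norm_num) hp
      have h2 : 1 / 2 ≤ 1 / q := by linarith
      exact (one_div_le_one_div (by norm_num) hq0).1 h2
    have hth1 : 1 - 2 / p ≤ 1 := by
      have : 0 < 2 / p := by positivity
      linarith
    have hmS : S ^ (1 - 2 / p) = S ^ (1 - 2 / p - 1) * S := by
      rw [← Real.rpow_add_one hS.ne']; congr 1; ring
    have hm2 : S ^ (1 - 2 / p - 1 - 1) = S ^ (1 - 2 / p - 1) / S := by
      rw [Real.rpow_sub_one hS.ne']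
    have hmX : S ^ (1 - 2 / p - 1) * (u ^ 2 + η) ≤ 1 := by
      have h1 : u ^ 2 + η ≤ S ^ (2 / p) := by
        have : u ^ 2 + η = (Ph (p / 2) η u) ^ (2 / p) := by
          unfold Ph
          rw [← Real.rpow_mul hXp.le]
          have : p / 2 * (2 / p) = 1 := by field_simp
          rw [this, Real.rpow_one]
        rw [this]
        exact Real.rpow_le_rpow (Ph_pos hη u).le hfS (by positivity)
      calc S ^ (1 - 2 / p - 1) * (u ^ 2 + η) ≤ S ^ (1 - 2 / p - 1) * S ^ (2 / p) := by gcongr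
        _ = 1 := by
          rw [← Real.rpow_add hS]
          have : 1 - 2 / p - 1 + 2 / p = 0 := by ring
          rw [this, Real.rpow_zero]
    have hbeS : ((v ^ 2 + η) ^ (q / 2 - 1))⁻¹ ≤ S ^ (1 - 2 / p) := by
      have h1 : ((v ^ 2 + η) ^ (q / 2 - 1))⁻¹ = (Ph (q / 2) η v) ^ (1 - 2 / p) := by
        unfold Ph
        rw [← Real.rpow_mul hYp.le, ← Real.rpow_neg hYp.le]
        congr 1
        have : 1 / p = 1 - 1 / q := by linarith
        have h2 : 2 / p = 2 * (1 / p) := by ring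
        rw [h2, this]
        field_simp
        ring
      rw [h1]
      exact Real.rpow_le_rpow (Ph_pos hη v).le hgS hth0
    have key := hess_alg (K := K) (p := p) (q := q) (X := u ^ 2 + η) (S := S)
      (m := S ^ (1 - 2 / p - 1)) (u := u) (f1 := Ph1 (p / 2) η u) (f2 := Ph2 (p / 2) η u)
      (g1 := Ph1 (q / 2) η v) (g2 := Ph2 (q / 2) η v) (al := (u ^ 2 + η) ^ (p / 2 - 1))
      (be := (v ^ 2 + η) ^ (q / 2 - 1)) (th := 1 - 2 / p) (A := A) (B := B) hp0 hS
      (by positivity) hXp hmX (by linarith) hth0 hth1 (by positivity) (by positivity)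
      (by
        have h1 := Ph1_sq (a := p / 2) hη u
        have h2 : (2 * (p / 2)) = p := by ring
        rw [h2] at h1
        refine h1.trans ?_
        gcongr)
      (by
        have h1 := Ph1_sq (a := q / 2) hη v
        have h2 : (2 * (q / 2)) = q := by ring
        rw [h2] at h1
        refine h1.trans ?_
        gcongr)
      (by
        unfold Ph1
        have : u * (2 * (p / 2) * u * (u ^ 2 + η) ^ (p / 2 - 1)) =
          p * u ^ 2 * (u ^ 2 + η) ^ (p / 2 - 1) := by ring
        rw [this]; positivity)
      (by
        have h1 := Ph2_ge1 (a := p / 2) hη (by linarith) u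
        have h2 : (2 * (p / 2)) = p := by ring
        rwa [h2] at h1)
      (by
        have h1 := Ph2_ge2 (a := q / 2) hη (by linarith) (by linarith) v
        have h2 : (2 * (q / 2)) = q := by ring
        rwa [h2] at h1)
      (by
        have h1 := Ph2_ge2 (a := q / 2) hη (by linarith) (by linarith) v
        refine le_trans ?_ h1
        have : 0 ≤ 2 * (q / 2) - 1 := by linarith
        positivity)
      (by linarith) hK1 hK2
    rw [hm2]
    have h9 := mul_le_mul_of_nonneg_right hbeS (sq_nonneg A)
    rw [hmS] at h9 ⊢
    linarith
  qmin u v := by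
    have hp0 : 0 < p := by linarith
    have hq0 : 0 < q := by linarith
    have hth0 : 0 ≤ 1 - 2 / p := by
      rw [sub_nonneg, div_le_one hp0]; exact hp
    have hK : 0 ≤ K := by linarith
    have hSS : Sf p q η 0 0 ≤ Sf p q η u v := by
      unfold Sf Ph
      have h1 : (0:ℝ) ^ 2 + η ≤ u ^ 2 + η := by nlinarith [sq_nonneg u]
      have h2 : (0:ℝ) ^ 2 + η ≤ v ^ 2 + η := by nlinarith [sq_nonneg v]
      have h3 : 0 ≤ (0:ℝ) ^ 2 + η := by positivity
      exact add_le_add (Real.rpow_le_rpow h3 h1 (by linarith))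
        (Real.rpow_le_rpow h3 h2 (by linarith))
    have := (Sf_pos (p := p) (q := q) hη 0 0).le
    have h1 : (0:ℝ) ^ 2 + η ≤ u ^ 2 + η := by nlinarith [sq_nonneg u]
    unfold Qf
    exact add_le_add (mul_le_mul_of_nonneg_left hSS hK)
      (mul_le_mul h1 (Real.rpow_le_rpow this hSS hth0) (Real.rpow_nonneg this _) (by positivity))

end bellman

lemma cont_bdd {G : ℝ → ℝ → ℝ} (hG : Continuous (fun z : ℝ × ℝ => G z.1 z.2)) (R : ℝ) :
    ∃ M : ℝ, 0 ≤ M ∧ ∀ u v, |u| ≤ R → |v| ≤ R → |G u v| ≤ M := by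
  have hK : IsCompact (Set.Icc (-R) R ×ˢ Set.Icc (-R) R) := isCompact_Icc.prod isCompact_Icc
  obtain ⟨M, hM⟩ := hK.exists_bound_of_continuousOn hG.continuousOn
  refine ⟨|M|, abs_nonneg _, fun u v hu hv => ?_⟩
  exact (hM (u, v) ⟨abs_le.1 hu, abs_le.1 hv⟩).trans (le_abs_self _)

lemma dec_comp {d : ℕ} {G : ℝ → ℝ → ℝ} (hG : Continuous (fun z : ℝ × ℝ => G z.1 z.2))
    {u v w : EE d → ℝ} (hu : Dec u) (hv : Dec v) (hw : Dec w) :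
    Dec (fun x => G (u x) (v x) * w x) := by
  obtain ⟨A, hA, h1⟩ := hu.bdd
  obtain ⟨B, hB, h2⟩ := hv.bdd
  obtain ⟨M, hM, h⟩ := cont_bdd hG (max A B)
  exact hw.bmul (g := fun x => G (u x) (v x)) (hG.comp (hu.1.prodMk hv.1))
    (A := M) (fun x => h _ _ ((h1 x).trans (le_max_left _ _)) ((h2 x).trans (le_max_right _ _)))

lemma bell_lip (Bl : Bell) (R : ℝ) : ∃ M : ℝ, 0 ≤ M ∧ ∀ u v, |u| ≤ R → |v| ≤ R →
    |Bl.Q u v - Bl.Q 0 0| ≤ M * (|u| + |v|) := by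
  obtain ⟨M1, hM1, h1⟩ := cont_bdd Bl.cQu R
  obtain ⟨M2, hM2, h2⟩ := cont_bdd Bl.cQv R
  refine ⟨M1 + M2, by positivity, fun u v hu hv => ?_⟩
  have hd : ∀ t ∈ Set.Icc (0:ℝ) 1, HasDerivWithinAt (fun t => Bl.Q (t * u) (t * v))
      (Bl.Qu (t * u) (t * v) * u + Bl.Qv (t * u) (t * v) * v) (Set.Icc 0 1) t := by
    intro t _
    exact (Bl.dQ (fun t => t * u) (fun t => t * v) u v t
      (by simpa using (hasDerivAt_id t).mul_const u)
      (by simpa using (hasDerivAt_id t).mul_const v)).hasDerivWithinAt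
  have hb : ∀ t ∈ Set.Ico (0:ℝ) 1,
      ‖Bl.Qu (t * u) (t * v) * u + Bl.Qv (t * u) (t * v) * v‖ ≤ (M1 + M2) * (|u| + |v|) := by
    intro t ht
    have ht1 : |t| ≤ 1 := by rw [abs_of_nonneg ht.1]; exact ht.2.le
    have hu' : |t * u| ≤ R := by
      rw [abs_mul]; exact (mul_le_of_le_one_left (abs_nonneg _) ht1).trans hu
    have hv' : |t * v| ≤ R := by
      rw [abs_mul]; exact (mul_le_of_le_one_left (abs_nonneg _) ht1).trans hv
    have a1 := h1 _ _ hu' hv'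
    have a2 := h2 _ _ hu' hv'
    rw [Real.norm_eq_abs]
    refine (abs_add_le _ _).trans ?_
    rw [abs_mul, abs_mul]
    have b1 := mul_le_mul_of_nonneg_right a1 (abs_nonneg u)
    have b2 := mul_le_mul_of_nonneg_right a2 (abs_nonneg v)
    have c1 := mul_nonneg hM1 (abs_nonneg v)
    have c2 := mul_nonneg hM2 (abs_nonneg u)
    linarith
  have := norm_image_sub_le_of_norm_deriv_le_segment_01' hd hb
  simpa using this

lemma bell_dec (Bl : Bell) {d : ℕ} {u v : EE d → ℝ} (hu : Dec u) (hv : Dec v) :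
    Dec (fun x => Bl.Q (u x) (v x) - Bl.Q 0 0) := by
  obtain ⟨A, hA, h1⟩ := hu.bdd
  obtain ⟨B, hB, h2⟩ := hv.bdd
  obtain ⟨M, hM, h⟩ := bell_lip Bl (max A B)
  obtain ⟨_, C, hC, h3⟩ := hu
  obtain ⟨_, C', hC', h4⟩ := hv
  have hc : Continuous (fun x => Bl.Q (u x) (v x)) := Bl.cQ.comp (Continuous.prodMk ‹_› ‹_›)
  refine ⟨hc.sub continuous_const, M * (C + C'), by positivity, fun x => ?_⟩
  refine (h _ _ ((h1 x).trans (le_max_left _ _)) ((h2 x).trans (le_max_right _ _))).trans ?_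
  rw [mul_assoc, add_mul]
  exact mul_le_mul_of_nonneg_left (add_le_add (h3 x) (h4 x)) hM

lemma heat_lap {d : ℕ} {f : EE d → ℝ} (hf : CCS f) (s : ℝ) (x : EE d) :
    heat s (lap f) x = ∑ k, heat s (pderiv' k (pderiv' k f)) x := by
  unfold heat lap
  rw [← integral_finsetSum _ (fun k _ => heat_integrand ((hf.pderiv k).pderiv k).dec s x)]
  simp only [Finset.sum_mul]

lemma bell_B_deriv (Bl : Bell) {d : ℕ} {f g : EE d → ℝ} (hf : CCS f) (hg : CCS g) (s₀ : ℝ) :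
    HasDerivAt (fun s => ∫ x, (Bl.Q (heat s f x) (heat s g x) - Bl.Q 0 0))
      (∫ x, (Bl.Qu (heat s₀ f x) (heat s₀ g x) * (s₀ * heat s₀ (lap f) x) +
        Bl.Qv (heat s₀ f x) (heat s₀ g x) * (s₀ * heat s₀ (lap g) x))) s₀ := by
  set S : ℝ := |s₀| + 1 with hS
  have hS1 : 1 ≤ S := by have := abs_nonneg s₀; linarith
  obtain ⟨C1, hC1, h1⟩ := heat_decay hf.dec hS1
  obtain ⟨C2, hC2, h2⟩ := heat_decay hg.dec hS1
  obtain ⟨C3, hC3, h3⟩ := heat_decay hf.lap.dec hS1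
  obtain ⟨C4, hC4, h4⟩ := heat_decay hg.lap.dec hS1
  obtain ⟨M1, hM1, k1⟩ := cont_bdd Bl.cQu (max C1 C2)
  obtain ⟨M2, hM2, k2⟩ := cont_bdd Bl.cQv (max C1 C2)
  have hb1 : ∀ s, |s| ≤ S → ∀ x, |heat s f x| ≤ max C1 C2 := fun s hs x =>
    ((h1 s hs x).trans (mul_le_of_le_one_right hC1 (dec_le_one x))).trans (le_max_left _ _)
  have hb2 : ∀ s, |s| ≤ S → ∀ x, |heat s g x| ≤ max C1 C2 := fun s hs x =>
    ((h2 s hs x).trans (mul_le_of_le_one_right hC2 (dec_le_one x))).trans (le_max_right _ _)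
  have hdecF' : Dec (fun x => Bl.Qu (heat s₀ f x) (heat s₀ g x) * (s₀ * heat s₀ (lap f) x) +
        Bl.Qv (heat s₀ f x) (heat s₀ g x) * (s₀ * heat s₀ (lap g) x)) :=
    (dec_comp Bl.cQu (heat_dec hf.dec s₀) (heat_dec hg.dec s₀)
      ((heat_dec hf.lap.dec s₀).const_mul s₀)).add
    (dec_comp Bl.cQv (heat_dec hf.dec s₀) (heat_dec hg.dec s₀)
      ((heat_dec hg.lap.dec s₀).const_mul s₀))
  refine (hasDerivAt_integral_of_dominated_loc_of_deriv_le (μ := (volume : Measure (EE d)))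
    (F := fun (s : ℝ) x => Bl.Q (heat s f x) (heat s g x) - Bl.Q 0 0)
    (F' := fun (s : ℝ) x => Bl.Qu (heat s f x) (heat s g x) * (s * heat s (lap f) x) +
        Bl.Qv (heat s f x) (heat s g x) * (s * heat s (lap g) x)) (x₀ := s₀)
    (s := Metric.ball s₀ 1)
    (bound := fun x => (M1 * (S * C3) + M2 * (S * C4)) * ((1 + ‖x‖) ^ (d + 1))⁻¹)
    (Metric.ball_mem_nhds _ one_pos)
    (Filter.Eventually.of_forall fun s =>
      (bell_dec Bl (heat_dec hf.dec s) (heat_dec hg.dec s)).1.aestronglyMeasurable)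
    (bell_dec Bl (heat_dec hf.dec s₀) (heat_dec hg.dec s₀)).integrable
    hdecF'.1.aestronglyMeasurable
    (Filter.Eventually.of_forall fun x s hs => ?_)
    ((dec_integrable d).const_mul _)
    (Filter.Eventually.of_forall fun x s _ => ?_)).2
  · have hs' : |s| ≤ S := by
      have h5 : |s - s₀| < 1 := by simpa [Real.dist_eq] using hs
      have h6 : |s| ≤ |s - s₀| + |s₀| := by
        have := abs_add_le (s - s₀) s₀; simpa using this
      linarith
    have a1 := k1 _ _ (hb1 s hs' x) (hb2 s hs' x)
    have a2 := k2 _ _ (hb1 s hs' x) (hb2 s hs' x)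
    have a3 := h3 s hs' x
    have a4 := h4 s hs' x
    rw [Real.norm_eq_abs]
    refine (abs_add_le _ _).trans ?_
    rw [abs_mul, abs_mul, abs_mul, abs_mul, add_mul]
    have hS0 : 0 ≤ S := by linarith
    have hdp := (dec_pos x).le
    refine add_le_add ?_ ?_
    · calc _ ≤ M1 * (S * (C3 * ((1 + ‖x‖) ^ (d + 1))⁻¹)) := by gcongr
        _ = _ := by ring
    · calc _ ≤ M2 * (S * (C4 * ((1 + ‖x‖) ^ (d + 1))⁻¹)) := by gcongr
        _ = _ := by ring
  · exact (Bl.dQ (fun s => heat s f x) (fun s => heat s g x) _ _ s (heat_ds hf s x)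
      (heat_ds hg s x)).sub_const _

/-- Hessian term -/
noncomputable def Hs (Bl : Bell) {d : ℕ} (f g : EE d → ℝ) (s : ℝ) (k : Fin d) (x : EE d) : ℝ :=
  Bl.Quu (heat s f x) (heat s g x) * heat s (pderiv' k f) x ^ 2 +
  2 * Bl.Quv (heat s f x) (heat s g x) * heat s (pderiv' k f) x * heat s (pderiv' k g) x +
  Bl.Qvv (heat s f x) (heat s g x) * heat s (pderiv' k g) x ^ 2

lemma Hs_dec (Bl : Bell) {d : ℕ} {f g : EE d → ℝ} (hf : CCS f) (hg : CCS g) (s : ℝ) (k : Fin d) :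
    Dec (Hs Bl f g s k) := by
  have hu := heat_dec hf.dec s
  have hv := heat_dec hg.dec s
  have hA := heat_dec (hf.pderiv k).dec s
  have hB := heat_dec (hg.pderiv k).dec s
  have h := ((dec_comp Bl.cQuu hu hv (hA.mul hA)).add
    ((dec_comp Bl.cQuv hu hv (hB.mul hA)).const_mul 2)).add
    (dec_comp Bl.cQvv hu hv (hB.mul hB))
  convert h using 1
  funext x
  unfold Hs
  ring

lemma bell_ibp (Bl : Bell) {d : ℕ} {f g : EE d → ℝ} (hf : CCS f) (hg : CCS g) (s : ℝ) (k : Fin d) :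
    ∫ x, (Bl.Qu (heat s f x) (heat s g x) * heat s (pderiv' k (pderiv' k f)) x +
      Bl.Qv (heat s f x) (heat s g x) * heat s (pderiv' k (pderiv' k g)) x) =
    - ∫ x, Hs Bl f g s k x := by
  have hu := heat_dec hf.dec s
  have hv := heat_dec hg.dec s
  have hA := heat_dec (hf.pderiv k).dec s
  have hB := heat_dec (hg.pderiv k).dec s
  have hA2 := heat_dec ((hf.pderiv k).pderiv k).dec s
  have hB2 := heat_dec ((hg.pderiv k).pderiv k).dec s
  have hR : Dec (fun x => Bl.Qu (heat s f x) (heat s g x) * heat s (pderiv' k (pderiv' k f)) x +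
      Bl.Qv (heat s f x) (heat s g x) * heat s (pderiv' k (pderiv' k g)) x) :=
    (dec_comp Bl.cQu hu hv hA2).add (dec_comp Bl.cQv hu hv hB2)
  have hh : Dec (fun x => Bl.Qu (heat s f x) (heat s g x) * heat s (pderiv' k f) x +
      Bl.Qv (heat s f x) (heat s g x) * heat s (pderiv' k g) x) :=
    (dec_comp Bl.cQu hu hv hA).add (dec_comp Bl.cQv hu hv hB)
  have hz := integral_lineDeriv_zero (v := ev k) hh.integrable
    ((hR.add (Hs_dec Bl hf hg s k)).integrable) (fun x => by
      have du := heat_dx hf s x k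
      have dv := heat_dx hg s x k
      have e0 : x + (0:ℝ) • ev k = x := by simp
      have := ((Bl.dQu _ _ _ _ 0 du dv).mul (heat_dx (hf.pderiv k) s x k)).add
        ((Bl.dQv _ _ _ _ 0 du dv).mul (heat_dx (hg.pderiv k) s x k))
      refine hda_of this (fun t => rfl) ?_
      simp only [e0, Hs]
      ring)
  rw [integral_add hR.integrable (Hs_dec Bl hf hg s k).integrable] at hz
  linarith

lemma bell_B_deriv2 (Bl : Bell) {d : ℕ} {f g : EE d → ℝ} (hf : CCS f) (hg : CCS g) (s : ℝ) :
    HasDerivAt (fun s => ∫ x, (Bl.Q (heat s f x) (heat s g x) - Bl.Q 0 0))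
      (- (s * ∫ x, ∑ k, Hs Bl f g s k x)) s := by
  refine hda_of (bell_B_deriv Bl hf hg s) (fun t => rfl) ?_
  have hu := heat_dec hf.dec s
  have hv := heat_dec hg.dec s
  rw [integral_finsetSum _ (fun k _ => (Hs_dec Bl hf hg s k).integrable), ← mul_neg,
    ← Finset.sum_neg_distrib]
  simp only [← bell_ibp Bl hf hg s]
  rw [← integral_finsetSum _ (fun k _ =>
    ((dec_comp Bl.cQu hu hv (heat_dec ((hf.pderiv k).pderiv k).dec s)).add
    (dec_comp Bl.cQv hu hv (heat_dec ((hg.pderiv k).pderiv k).dec s))).integrable),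
    ← integral_const_mul]
  congr 1
  funext x
  rw [heat_lap hf, heat_lap hg, Finset.sum_add_distrib, ← Finset.mul_sum, ← Finset.mul_sum]
  ring

lemma Hs_ge (Bl : Bell) {d : ℕ} (f g : EE d → ℝ) (s : ℝ) (i j : Fin d) (x : EE d) :
    2 * (|heat s (pderiv' i f) x| * |heat s (pderiv' j g) x|) ≤ ∑ k, Hs Bl f g s k x := by
  set b := Bl.bt (heat s f x) (heat s g x) with hb
  have hb0 : 0 < b := Bl.btpos _ _
  have h1 : ∑ k, (b⁻¹ * heat s (pderiv' k f) x ^ 2 + b * heat s (pderiv' k g) x ^ 2) ≤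
      ∑ k, Hs Bl f g s k x := Finset.sum_le_sum fun k _ => Bl.hess _ _ _ _
  refine le_trans ?_ h1
  rw [Finset.sum_add_distrib]
  have h2 : b⁻¹ * heat s (pderiv' i f) x ^ 2 ≤ ∑ k, b⁻¹ * heat s (pderiv' k f) x ^ 2 :=
    Finset.single_le_sum (f := fun k => b⁻¹ * heat s (pderiv' k f) x ^ 2)
      (fun k _ => by positivity) (Finset.mem_univ i)
  have h3 : b * heat s (pderiv' j g) x ^ 2 ≤ ∑ k, b * heat s (pderiv' k g) x ^ 2 :=
    Finset.single_le_sum (f := fun k => b * heat s (pderiv' k g) x ^ 2)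
      (fun k _ => by positivity) (Finset.mem_univ j)
  refine le_trans ?_ (add_le_add h2 h3)
  rw [← sq_abs (heat s (pderiv' i f) x), ← sq_abs (heat s (pderiv' j g) x)]
  generalize |heat s (pderiv' i f) x| = A
  generalize |heat s (pderiv' j g) x| = B
  have h4 : 0 ≤ b⁻¹ * (A - b * B) ^ 2 := by positivity
  have h5 : b⁻¹ * (A - b * B) ^ 2 = b⁻¹ * A ^ 2 + b * B ^ 2 - 2 * (A * B) := by
    field_simp; ring
  linarith

lemma core (Bl : Bell) {d : ℕ} {f g : EE d → ℝ} (hf : CCS f) (hg : CCS g) (i j : Fin d)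
    {F F' : ℝ → ℝ} (hF : ∀ s, HasDerivAt F (F' s) s)
    (hF' : ∀ s, 0 ≤ s →
      -(s * (2 * ∫ x, |heat s (pderiv' i f) x| * |heat s (pderiv' j g) x|)) ≤ F' s)
    (hlim : Filter.Tendsto F Filter.atTop (nhds 0)) :
    F 0 ≤ ∫ x, (Bl.Q (f x) (g x) - Bl.Q 0 0) := by
  set B : ℝ → ℝ := fun s => ∫ x, (Bl.Q (heat s f x) (heat s g x) - Bl.Q 0 0) with hB
  have hd : ∀ s, HasDerivAt (fun s => F s - B s)
      (F' s - (- (s * ∫ x, ∑ k, Hs Bl f g s k x))) s := fun s =>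
    (hF s).sub (bell_B_deriv2 Bl hf hg s)
  have hm : MonotoneOn (fun s => F s - B s) (Set.Ici 0) := by
    apply monotoneOn_of_deriv_nonneg (convex_Ici 0)
    · exact fun s _ => (hd s).continuousAt.continuousWithinAt
    · exact fun s _ => (hd s).differentiableAt.differentiableWithinAt
    · intro s hs
      rw [interior_Ici] at hs
      have hs0 : 0 ≤ s := le_of_lt hs
      rw [(hd s).deriv]
      have h1 : 2 * ∫ x, |heat s (pderiv' i f) x| * |heat s (pderiv' j g) x| ≤
          ∫ x, ∑ k, Hs Bl f g s k x := by
        rw [← integral_const_mul]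
        refine integral_mono ?_ ?_ (fun x => Hs_ge Bl f g s i j x)
        · exact (((heat_dec (hg.pderiv j).dec s).abs.mul
            (heat_dec (hf.pderiv i).dec s).abs).const_mul 2).integrable
        · exact (Dec.sum _ (fun k _ => Hs_dec Bl hf hg s k)).integrable
      have h2 := hF' s hs0
      have h3 := mul_le_mul_of_nonneg_left h1 hs0
      linarith
  have hB0 : B 0 = ∫ x, (Bl.Q (f x) (g x) - Bl.Q 0 0) := by
    simp only [hB, heat_zero]
  rw [← hB0]
  have h2 : ∀ s, 0 ≤ s → F 0 - B 0 ≤ F s := by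
    intro s hs
    have h3 := hm (Set.mem_Ici.2 le_rfl) (Set.mem_Ici.2 hs) hs
    have h4 : 0 ≤ B s := integral_nonneg fun x => sub_nonneg.2 (Bl.qmin _ _)
    simp only at h3
    linarith
  have h5 : F 0 - B 0 ≤ 0 := ge_of_tendsto hlim
    (Filter.eventually_atTop.2 ⟨0, fun s hs => h2 s hs⟩)
  linarith

lemma heat_L1 {d : ℕ} {h : EE d → ℝ} (hh : Dec h) (s : ℝ) : ∫ x, |heat s h x| ≤ ∫ x, |h x| := by
  have e1 : ∀ f : EE d → ℝ, Dec f → ∫ x, |f x| = (∫⁻ x, ‖f x‖ₑ).toReal := by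
    intro f hf
    exact integral_norm_eq_lintegral_enorm hf.1.aestronglyMeasurable
  rw [e1 _ (heat_dec hh s), e1 _ hh]
  have hfin : ∫⁻ x, ‖h x‖ₑ ≠ ⊤ := hh.integrable.2.ne
  refine ENNReal.toReal_mono hfin ?_
  have hc := hh.1
  have hg := gam_cont d
  calc ∫⁻ x, ‖heat s h x‖ₑ ≤ ∫⁻ x, ∫⁻ z, ‖h (x + s • z)‖ₑ * ‖gam z‖ₑ := by
        refine lintegral_mono fun x => ?_
        refine (enorm_integral_le_lintegral_enorm _).trans (le_of_eq ?_)
        simp only [enorm_mul]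
    _ = ∫⁻ z, ∫⁻ x, ‖h (x + s • z)‖ₑ * ‖gam z‖ₑ := by
        refine lintegral_lintegral_swap ?_
        have : Continuous (Function.uncurry fun (x z : EE d) => ‖h (x + s • z) * gam z‖ₑ) := by
          unfold Function.uncurry
          fun_prop
        simp only [enorm_mul] at this
        exact this.measurable.aemeasurable
    _ = ∫⁻ z, (∫⁻ x, ‖h x‖ₑ) * ‖gam z‖ₑ := by
        refine lintegral_congr fun z => ?_
        rw [lintegral_mul_const _ (Continuous.measurable (by fun_prop))]
        rw [lintegral_add_right_eq_self (fun x => ‖h x‖ₑ)]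
    _ = (∫⁻ x, ‖h x‖ₑ) * ∫⁻ z : EE d, ‖gam z‖ₑ := by
        rw [lintegral_const_mul _ (by fun_prop)]
    _ = ∫⁻ x, ‖h x‖ₑ := by
        have : ∫⁻ z : EE d, ‖gam z‖ₑ = 1 := by
          have h1 := ofReal_integral_norm_eq_lintegral_enorm (gam_int d)
          rw [← h1]
          have : ∀ z : EE d, ‖gam z‖ = gam z := fun z => abs_of_pos (gam_pos z)
          simp only [this, gam_one, ENNReal.ofReal_one]
        rw [this, mul_one]

lemma pderiv_lap {d : ℕ} {f : EE d → ℝ} (hf : CCS f) (i : Fin d) :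
    pderiv' i (lap f) = lap (pderiv' i f) := by
  funext x
  have : pderiv' i (lap f) x = ∑ k, pderiv' i (pderiv' k (pderiv' k f)) x := by
    unfold lap
    show fderiv ℝ _ x _ = _
    rw [fderiv_fun_sum fun k _ => ((hf.pderiv k).pderiv k).differentiable x]
    simp [pderiv']
  rw [this]
  unfold lap
  refine Finset.sum_congr rfl fun k _ => ?_
  rw [(hf.pderiv k).comm i k, hf.comm i k]

lemma heat_ibp {d : ℕ} {a g : EE d → ℝ} (ha : CCS a) (hg : CCS g) (s : ℝ) (k : Fin d) :
    ∫ x, heat s a x * heat s (pderiv' k g) x = - ∫ x, heat s (pderiv' k a) x * heat s g x := by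
  have h1 := heat_dec ha.dec s
  have h2 := heat_dec hg.dec s
  have h3 := heat_dec (ha.pderiv k).dec s
  have h4 := heat_dec (hg.pderiv k).dec s
  exact ibp_line (v := ev k) (h2.mul h3).integrable (h4.mul h1).integrable (h2.mul h1).integrable
    (fun x => heat_dx ha s x k) (fun x => heat_dx hg s x k)

lemma heat_lap_symm {d : ℕ} {a g : EE d → ℝ} (ha : CCS a) (hg : CCS g) (s : ℝ) :
    ∫ x, heat s a x * heat s (lap g) x = ∫ x, heat s (lap a) x * heat s g x := by
  have h1 := heat_dec ha.dec s
  have h2 := heat_dec hg.dec s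
  simp only [heat_lap ha, heat_lap hg, Finset.mul_sum, Finset.sum_mul]
  rw [integral_finsetSum _ (fun k _ => ((heat_dec ((hg.pderiv k).pderiv k).dec s).mul h1).integrable),
    integral_finsetSum _ (fun k _ => (h2.mul (heat_dec ((ha.pderiv k).pderiv k).dec s)).integrable)]
  refine Finset.sum_congr rfl fun k _ => ?_
  rw [heat_ibp ha (hg.pderiv k), heat_ibp (ha.pderiv k) hg, neg_neg]

lemma pair_deriv {d : ℕ} {f g : EE d → ℝ} (hf : CCS f) (hg : CCS g) (s₀ : ℝ) :
    HasDerivAt (fun s => ∫ x, heat s f x * heat s g x)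
      (∫ x, ((s₀ * heat s₀ (lap f) x) * heat s₀ g x + heat s₀ f x * (s₀ * heat s₀ (lap g) x))) s₀ := by
  set S : ℝ := |s₀| + 1 with hS
  have hS1 : 1 ≤ S := by have := abs_nonneg s₀; linarith
  obtain ⟨C1, hC1, h1⟩ := heat_decay hf.dec hS1
  obtain ⟨C2, hC2, h2⟩ := heat_decay hg.dec hS1
  obtain ⟨C3, hC3, h3⟩ := heat_decay hf.lap.dec hS1
  obtain ⟨C4, hC4, h4⟩ := heat_decay hg.lap.dec hS1
  have hb1 : ∀ s, |s| ≤ S → ∀ x, |heat s f x| ≤ C1 := fun s hs x =>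
    ((h1 s hs x).trans (mul_le_of_le_one_right hC1 (dec_le_one x)))
  have hb2 : ∀ s, |s| ≤ S → ∀ x, |heat s g x| ≤ C2 := fun s hs x =>
    ((h2 s hs x).trans (mul_le_of_le_one_right hC2 (dec_le_one x)))
  have hdecF' : Dec (fun x => (s₀ * heat s₀ (lap f) x) * heat s₀ g x +
      heat s₀ f x * (s₀ * heat s₀ (lap g) x)) :=
    ((heat_dec hg.dec s₀).mul ((heat_dec hf.lap.dec s₀).const_mul s₀)).add
    (((heat_dec hg.lap.dec s₀).const_mul s₀).mul (heat_dec hf.dec s₀))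
  refine (hasDerivAt_integral_of_dominated_loc_of_deriv_le (μ := (volume : Measure (EE d)))
    (F := fun (s : ℝ) x => heat s f x * heat s g x)
    (F' := fun (s : ℝ) x => (s * heat s (lap f) x) * heat s g x + heat s f x * (s * heat s (lap g) x))
    (x₀ := s₀) (s := Metric.ball s₀ 1)
    (bound := fun x => (S * C3 * C2 + C1 * (S * C4)) * ((1 + ‖x‖) ^ (d + 1))⁻¹)
    (Metric.ball_mem_nhds _ one_pos)
    (Filter.Eventually.of_forall fun s =>
      ((heat_dec hg.dec s).mul (heat_dec hf.dec s)).1.aestronglyMeasurable)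
    ((heat_dec hg.dec s₀).mul (heat_dec hf.dec s₀)).integrable
    hdecF'.1.aestronglyMeasurable
    (Filter.Eventually.of_forall fun x s hs => ?_)
    ((dec_integrable d).const_mul _)
    (Filter.Eventually.of_forall fun x s _ => ?_)).2
  · have hs' : |s| ≤ S := by
      have h5 : |s - s₀| < 1 := by simpa [Real.dist_eq] using hs
      have h6 : |s| ≤ |s - s₀| + |s₀| := by
        have := abs_add_le (s - s₀) s₀; simpa using this
      linarith
    have a1 := hb1 s hs' x
    have a2 := hb2 s hs' x
    have a3 := h3 s hs' x
    have a4 := h4 s hs' x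
    rw [Real.norm_eq_abs]
    refine (abs_add_le _ _).trans ?_
    rw [abs_mul, abs_mul, abs_mul, abs_mul, add_mul]
    have hS0 : 0 ≤ S := by linarith
    have hdp := (dec_pos x).le
    refine add_le_add ?_ ?_
    · calc _ ≤ (S * (C3 * ((1 + ‖x‖) ^ (d + 1))⁻¹)) * C2 := by gcongr
        _ = _ := by ring
    · calc _ ≤ C1 * (S * (C4 * ((1 + ‖x‖) ^ (d + 1))⁻¹)) := by gcongr
        _ = _ := by ring
  · exact (heat_ds hf s x).mul (heat_ds hg s x)

lemma pair_deriv2 {d : ℕ} {φ g : EE d → ℝ} (hφ : CCS φ) (hg : CCS g) (i j : Fin d) (s : ℝ) :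
    HasDerivAt (fun s => ∫ x, heat s (pderiv' i (pderiv' j φ)) x * heat s g x)
      (-(s * (2 * ∫ x, heat s (pderiv' i (lap φ)) x * heat s (pderiv' j g) x))) s := by
  have ha := (hφ.pderiv j).pderiv i
  refine hda_of (pair_deriv ha hg s) (fun t => rfl) ?_
  have h1 := heat_dec ha.dec s
  have h2 := heat_dec hg.dec s
  have h3 := heat_dec ha.lap.dec s
  have h4 := heat_dec hg.lap.dec s
  rw [integral_add (h2.mul (h3.const_mul s)).integrable ((h4.const_mul s).mul h1).integrable]
  have e1 : ∫ x, s * heat s (lap (pderiv' i (pderiv' j φ))) x * heat s g x =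
      s * ∫ x, heat s (lap (pderiv' i (pderiv' j φ))) x * heat s g x := by
    rw [← integral_const_mul]; simp only [mul_assoc]
  have e2 : ∫ x, heat s (pderiv' i (pderiv' j φ)) x * (s * heat s (lap g) x) =
      s * ∫ x, heat s (pderiv' i (pderiv' j φ)) x * heat s (lap g) x := by
    rw [← integral_const_mul]; congr 1; funext x; ring
  rw [e1, e2, heat_lap_symm ha hg, heat_ibp (hφ.lap.pderiv i) hg s j]
  rw [hφ.lap.comm j i, pderiv_lap hφ j, pderiv_lap (hφ.pderiv j) i]
  ring

lemma pair_lim {d : ℕ} (hd : 1 ≤ d) {a g : EE d → ℝ} (ha : CCS a) (hg : CCS g) :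
    Filter.Tendsto (fun s => ∫ x, heat s a x * heat s g x) Filter.atTop (nhds 0) := by
  obtain ⟨C, hC, h⟩ := heat_inf hg
  have hlim : Filter.Tendsto (fun s : ℝ => (∫ x, |a x|) * (C * (s ^ d)⁻¹)) Filter.atTop (nhds 0) := by
    have h0 : Filter.Tendsto (fun s : ℝ => (s ^ d)⁻¹) Filter.atTop (nhds 0) :=
      (Filter.tendsto_pow_atTop (by omega)).inv_tendsto_atTop
    simpa using (h0.const_mul C).const_mul (∫ x, |a x|)
  refine squeeze_zero_norm' (Filter.eventually_atTop.2 ⟨1, fun s hs => ?_⟩) hlim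
  have hs0 : 0 < s := by linarith
  calc ‖∫ x, heat s a x * heat s g x‖ ≤ ∫ x, |heat s a x| * (C * (s ^ d)⁻¹) := by
        refine norm_integral_le_of_norm_le ((heat_dec ha.dec s).integrable.abs.mul_const _)
          (Filter.Eventually.of_forall fun x => ?_)
        rw [Real.norm_eq_abs, abs_mul]
        exact mul_le_mul_of_nonneg_left (h s hs0 x) (abs_nonneg _)
    _ = (∫ x, |heat s a x|) * (C * (s ^ d)⁻¹) := integral_mul_const _ _
    _ ≤ _ := mul_le_mul_of_nonneg_right (heat_L1 ha.dec s) (by positivity)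

lemma abs_int {d : ℕ} {a b : EE d → ℝ} (_ : Dec a) (_ : Dec b) :
    |∫ x, a x * b x| ≤ ∫ x, |a x| * |b x| := by
  refine (norm_integral_le_integral_norm (fun x => a x * b x)).trans (le_of_eq ?_)
  simp only [Real.norm_eq_abs, abs_mul]

lemma bil1 (Bl : Bell) {d : ℕ} (hd : 1 ≤ d) {φ g : EE d → ℝ} (hφ : CCS φ) (hg : CCS g) (i j : Fin d) :
    ∫ x, pderiv' i (pderiv' j φ) x * g x ≤ ∫ x, (Bl.Q (lap φ x) (g x) - Bl.Q 0 0) := by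
  have := core Bl hφ.lap hg i j (pair_deriv2 hφ hg i j) (fun s hs => by
    have h1 := abs_int (heat_dec (hφ.lap.pderiv i).dec s) (heat_dec (hg.pderiv j).dec s)
    have h2 := (le_abs_self _).trans h1
    have := mul_le_mul_of_nonneg_left h2 hs
    linarith) (pair_lim hd ((hφ.pderiv j).pderiv i) hg)
  simpa only [heat_zero] using this

lemma bil2 (Bl : Bell) {d : ℕ} (hd : 1 ≤ d) {φ g : EE d → ℝ} (hφ : CCS φ) (hg : CCS g) (i j : Fin d) :
    ∫ x, pderiv' i (pderiv' j φ) x * g x ≤ ∫ x, (Bl.Q (g x) (lap φ x) - Bl.Q 0 0) := by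
  have := core Bl hg hφ.lap j i (pair_deriv2 hφ hg i j) (fun s hs => by
    have h1 := abs_int (heat_dec (hφ.lap.pderiv i).dec s) (heat_dec (hg.pderiv j).dec s)
    have h2 := (le_abs_self _).trans h1
    have h3 : ∀ x, |heat s (pderiv' j g) x| * |heat s (pderiv' i (lap φ)) x| =
      |heat s (pderiv' i (lap φ)) x| * |heat s (pderiv' j g) x| := fun x => mul_comm _ _
    simp only [h3]
    have := mul_le_mul_of_nonneg_left h2 hs
    linarith) (pair_lim hd ((hφ.pderiv j).pderiv i) hg)
  simpa only [heat_zero] using this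

lemma lim_le {X : ℝ} {G : ℝ → ℝ} (hG : Continuous G) (h : ∀ η, 0 < η → X ≤ G η) : X ≤ G 0 := by
  have h1 : Filter.Tendsto G (nhdsWithin 0 (Set.Ioi 0)) (nhds (G 0)) :=
    (hG.tendsto 0).mono_left nhdsWithin_le_nhds
  exact ge_of_tendsto h1 (Filter.eventually_of_mem self_mem_nhdsWithin fun η hη => h η hη)

lemma Qf_le {K p q η : ℝ} (hp : 2 ≤ p) (hη : 0 < η) (u v : ℝ) :
    Qf K p q η u v ≤ (K + 1) * Sf p q η u v := by
  unfold Qf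
  have hS := Sf_pos (p := p) (q := q) hη u v
  have hm : 0 < u ^ 2 + η := by positivity
  have h1 : u ^ 2 + η ≤ Sf p q η u v ^ (2 / p) := by
    have h2 : (u ^ 2 + η) ^ (p / 2) ≤ Sf p q η u v := by
      have := Ph_pos (a := q / 2) hη v
      unfold Sf
      show Ph (p / 2) η u ≤ _
      linarith
    calc u ^ 2 + η = ((u ^ 2 + η) ^ (p / 2)) ^ (2 / p) := by
          rw [← Real.rpow_mul hm.le, show p / 2 * (2 / p) = 1 by field_simp, Real.rpow_one]
      _ ≤ _ := Real.rpow_le_rpow (by positivity) h2 (by positivity)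
  have h3 : (u ^ 2 + η) * Sf p q η u v ^ (1 - 2 / p) ≤ Sf p q η u v := by
    calc _ ≤ Sf p q η u v ^ (2 / p) * Sf p q η u v ^ (1 - 2 / p) := by gcongr
      _ = _ := by rw [← Real.rpow_add hS, add_sub_cancel, Real.rpow_one]
  linarith

lemma sq_rpow (u : ℝ) (p : ℝ) : (u ^ 2) ^ (p / 2) = |u| ^ p := by
  rw [← sq_abs, ← Real.rpow_natCast, ← Real.rpow_mul (abs_nonneg _)]
  congr 1
  push_cast; ring

lemma par_cont {d : ℕ} {a : ℝ} (ha : 0 ≤ a) {T : Set (EE d)} (hT : IsCompact T) {u : EE d → ℝ}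
    (hu : Continuous u) : Continuous (fun η : ℝ => ∫ x in T, (u x ^ 2 + η) ^ a) := by
  refine continuous_parametric_integral_of_continuous (f := fun (η : ℝ) x => (u x ^ 2 + η) ^ a) ?_ hT
  unfold Function.uncurry
  exact Continuous.rpow_const (by fun_prop) (fun _ => Or.inr ha)

lemma int_rpow {d : ℕ} {p : ℝ} (hp : 0 < p) {u : EE d → ℝ} (hu : CCS u) :
    Integrable (fun x => |u x| ^ p) := by
  have h1 : Continuous (fun x => |u x| ^ p) :=
    hu.continuous.abs.rpow_const (fun _ => Or.inr hp.le)
  refine h1.integrable_of_hasCompactSupport ?_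
  exact hu.2.comp_left (g := fun t => |t| ^ p) (by simp [hp.ne'])

lemma eta_lim {d : ℕ} {K p q X : ℝ} (hp : 2 ≤ p) (hq : 1 < q) (hK : 0 ≤ K) {u v : EE d → ℝ}
    (hu : CCS u) (hv : CCS v)
    (h : ∀ η, 0 < η → X ≤ ∫ x, (Qf K p q η (u x) (v x) - Qf K p q η 0 0)) :
    X ≤ (K + 1) * ((∫ x, |u x| ^ p) + ∫ x, |v x| ^ q) := by
  set T := tsupport u ∪ tsupport v with hT
  have hTc : IsCompact T := hu.2.isCompact.union hv.2.isCompact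
  have hc1 := par_cont (a := p / 2) (by linarith) hTc hu.continuous
  have hc2 := par_cont (a := q / 2) (by linarith) hTc hv.continuous
  have hc3 : Continuous (fun η : ℝ => (K + 1) * ((∫ x in T, (u x ^ 2 + η) ^ (p / 2)) +
      ∫ x in T, (v x ^ 2 + η) ^ (q / 2))) := by fun_prop
  have key := lim_le (X := X) hc3 (fun η hη => by
    refine (h η hη).trans ?_
    have hz : ∀ x, x ∉ T → Qf K p q η (u x) (v x) - Qf K p q η 0 0 = 0 := by
      intro x hx
      rw [hT, Set.mem_union, not_or] at hx
      rw [image_eq_zero_of_notMem_tsupport hx.1, image_eq_zero_of_notMem_tsupport hx.2, sub_self]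
    rw [← setIntegral_eq_integral_of_forall_compl_eq_zero hz]
    have hcu : Continuous (fun x => Ph (p / 2) η (u x)) := (Ph_cont hη).comp hu.continuous
    have hcv : Continuous (fun x => Ph (q / 2) η (v x)) := (Ph_cont hη).comp hv.continuous
    have iu : IntegrableOn (fun x => Ph (p / 2) η (u x)) T := hcu.continuousOn.integrableOn_compact hTc
    have iv : IntegrableOn (fun x => Ph (q / 2) η (v x)) T := hcv.continuousOn.integrableOn_compact hTc
    have e : (∫ x in T, (u x ^ 2 + η) ^ (p / 2)) + ∫ x in T, (v x ^ 2 + η) ^ (q / 2) =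
        ∫ x in T, Sf p q η (u x) (v x) := (integral_add iu iv).symm
    rw [e, ← integral_const_mul]
    have iS : IntegrableOn (fun x => Sf p q η (u x) (v x)) T := iu.add iv
    by_cases hi : IntegrableOn (fun x => Qf K p q η (u x) (v x) - Qf K p q η 0 0) T
    · refine integral_mono hi (iS.const_mul _) (fun x => ?_)
      have h1 := Qf_le (K := K) (q := q) hp hη (u x) (v x)
      have h2 : 0 ≤ Qf K p q η 0 0 := by
        have := Sf_pos (p := p) (q := q) hη 0 0
        unfold Qf; positivity
      simp only
      linarith
    · rw [integral_undef hi]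
      refine integral_nonneg fun x => ?_
      have := Sf_pos (p := p) (q := q) hη (u x) (v x)
      positivity)
  refine key.trans ?_
  simp only [add_zero, sq_rpow]
  refine mul_le_mul_of_nonneg_left (add_le_add ?_ ?_) (by linarith)
  · exact setIntegral_le_integral (int_rpow (by linarith) hu)
      (Filter.Eventually.of_forall fun x => by positivity)
  · exact setIntegral_le_integral (int_rpow (by linarith) hv)
      (Filter.Eventually.of_forall fun x => by positivity)

lemma bil {d : ℕ} (hd : 1 ≤ d) {p q : ℝ} (hp : 1 < p) (hq : 1 < q) (hpq : 1 / p + 1 / q = 1) :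
    ∃ K : ℝ, 0 < K ∧ ∀ (φ g : EE d → ℝ), CCS φ → CCS g → ∀ i j,
      ∫ x, pderiv' i (pderiv' j φ) x * g x ≤ K * ((∫ x, |lap φ x| ^ p) + ∫ x, |g x| ^ q) := by
  rcases le_total 2 p with h2 | h2
  · set K := 2 * p + (6 * q ^ 2 + 1) / (q * (q - 1)) with hK
    have hq0 : 0 < q * (q - 1) := mul_pos (by linarith) (by linarith)
    have hK1 : 2 * p ≤ K := by
      have : 0 ≤ (6 * q ^ 2 + 1) / (q * (q - 1)) := by positivity
      linarith
    have hK2 : 6 * q ^ 2 + 1 ≤ K * (q * (q - 1)) := by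
      rw [hK, add_mul, div_mul_cancel₀ _ hq0.ne']
      have : 0 ≤ 2 * p * (q * (q - 1)) := by positivity
      linarith
    refine ⟨K + 1, by linarith, fun φ g hφ hg i j => ?_⟩
    exact eta_lim h2 hq (by linarith) hφ.lap hg (fun η hη =>
      bil1 (bell K p q η h2 hq hpq hη hK1 hK2) hd hφ hg i j)
  · have hq2 : 2 ≤ q := by
      have h3 : 1 / 2 ≤ 1 / p := one_div_le_one_div_of_le (by linarith) h2
      have h4 : 1 / q ≤ 1 / 2 := by linarith
      exact (one_div_le_one_div (by linarith) (by norm_num)).1 h4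
    set K := 2 * q + (6 * p ^ 2 + 1) / (p * (p - 1)) with hK
    have hq0 : 0 < p * (p - 1) := mul_pos (by linarith) (by linarith)
    have hK1 : 2 * q ≤ K := by
      have : 0 ≤ (6 * p ^ 2 + 1) / (p * (p - 1)) := by positivity
      linarith
    have hK2 : 6 * p ^ 2 + 1 ≤ K * (p * (p - 1)) := by
      rw [hK, add_mul, div_mul_cancel₀ _ hq0.ne']
      have : 0 ≤ 2 * q * (p * (p - 1)) := by positivity
      linarith
    refine ⟨K + 1, by linarith, fun φ g hφ hg i j => ?_⟩
    have := eta_lim hq2 hp (by linarith) hg hφ.lap (fun η hη =>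
      bil2 (bell K q p η hq2 hp (by linarith) hη hK1 hK2) hd hφ hg i j)
    rwa [add_comm (∫ x, |g x| ^ q)] at this

/-- duality argument -/
lemma dual {d : ℕ} {p q K X : ℝ} (hp : 1 < p) (hq : 1 < q) (hpq : 1 / p + 1 / q = 1) (hK : 0 < K)
    {w : EE d → ℝ} (hw : CCS w)
    (h : ∀ g : EE d → ℝ, CCS g → ∫ x, w x * g x ≤ K * (X + ∫ x, |g x| ^ q)) (l : ℝ) (hl0 : 0 < l)
    (hl : K * l ^ q ≤ l / 2) :
    l / 2 * ∫ x, |w x| ^ p ≤ K * X := by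
  set T := tsupport w with hT
  have hTc : IsCompact T := hw.2.isCompact
  have hc1 := par_cont (a := (p - 1) / 2) (by linarith) hTc hw.continuous
  have hc2 : Continuous (fun ε : ℝ => K * X + l * (ε ^ ((1:ℝ) / 2) * ∫ x in T, (w x ^ 2 + ε) ^ ((p - 1) / 2))) := by
    have : Continuous (fun ε : ℝ => ε ^ ((1:ℝ) / 2)) :=
      continuous_id.rpow_const (fun _ => Or.inr (by norm_num))
    fun_prop
  have key := lim_le (X := l / 2 * ∫ x, |w x| ^ p) hc2 (fun ε hε => ?_)
  · simpa using key
  have hm : ∀ x, 0 < w x ^ 2 + ε := fun x => by positivity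
  have hsm : ContDiff ℝ (⊤ : ℕ∞) (fun x => l * (w x ^ 2 + ε) ^ ((p - 2) / 2)) :=
    contDiff_const.mul (((hw.1.pow 2).add contDiff_const).rpow_const_of_ne (fun x => (hm x).ne'))
  have hgC := hw.mul hsm
  have hcm : ∀ a : ℝ, IntegrableOn (fun x => (w x ^ 2 + ε) ^ a) T := fun a => by
    refine Continuous.continuousOn ?_ |>.integrableOn_compact hTc
    have := hw.continuous
    exact Continuous.rpow_const (by fun_prop) (fun x => Or.inl (hm x).ne')
  have h0 := h _ hgC
  have hw0 : ∀ x, x ∉ T → w x = 0 := fun x hx => image_eq_zero_of_notMem_tsupport hx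
  -- lower bound of the pairing
  have h1 : l * ((∫ x in T, (w x ^ 2 + ε) ^ (p / 2)) -
      ε ^ ((1:ℝ) / 2) * ∫ x in T, (w x ^ 2 + ε) ^ ((p - 1) / 2)) ≤
      ∫ x, w x * (l * (w x ^ 2 + ε) ^ ((p - 2) / 2) * w x) := by
    rw [← setIntegral_eq_integral_of_forall_compl_eq_zero
      (f := fun x => w x * (l * (w x ^ 2 + ε) ^ ((p - 2) / 2) * w x)) (s := T)
      (fun x hx => by rw [hw0 x hx]; simp)]
    rw [← integral_const_mul, ← integral_sub (hcm _) ((hcm _).const_mul _), ← integral_const_mul]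
    refine integral_mono (((hcm _).sub ((hcm _).const_mul _)).const_mul _) ?_ (fun x => ?_)
    · exact (hw.continuous.mul hgC.continuous).continuousOn.integrableOn_compact hTc
    · simp only
      have e1 : (w x ^ 2 + ε) ^ (p / 2) = (w x ^ 2 + ε) ^ ((p - 2) / 2) * (w x ^ 2 + ε) := by
        rw [← Real.rpow_add_one (hm x).ne']; congr 1; ring
      have e2 : (w x ^ 2 + ε) ^ ((p - 1) / 2) =
          (w x ^ 2 + ε) ^ ((p - 2) / 2) * (w x ^ 2 + ε) ^ ((1:ℝ) / 2) := by
        rw [← Real.rpow_add (hm x)]; congr 1; ring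
      have e3 : ε = ε ^ ((1:ℝ) / 2) * ε ^ ((1:ℝ) / 2) := by
        rw [← Real.rpow_add hε]; norm_num
      have e4 : ε ^ ((1:ℝ) / 2) ≤ (w x ^ 2 + ε) ^ ((1:ℝ) / 2) :=
        Real.rpow_le_rpow hε.le (by nlinarith [sq_nonneg (w x)]) (by norm_num)
      have e5 : ε ≤ ε ^ ((1:ℝ) / 2) * (w x ^ 2 + ε) ^ ((1:ℝ) / 2) := by
        calc ε = ε ^ ((1:ℝ) / 2) * ε ^ ((1:ℝ) / 2) := e3
          _ ≤ _ := by gcongr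
      rw [e1, e2]
      have hM : 0 < (w x ^ 2 + ε) ^ ((p - 2) / 2) := Real.rpow_pos_of_pos (hm x) _
      have := mul_le_mul_of_nonneg_left e5 (mul_pos hl0 hM).le
      nlinarith [this]
  have h2 : ∫ x, |l * (w x ^ 2 + ε) ^ ((p - 2) / 2) * w x| ^ q ≤
      l ^ q * ∫ x in T, (w x ^ 2 + ε) ^ (p / 2) := by
    rw [← setIntegral_eq_integral_of_forall_compl_eq_zero
      (f := fun x => |l * (w x ^ 2 + ε) ^ ((p - 2) / 2) * w x| ^ q) (s := T)
      (fun x hx => by rw [hw0 x hx]; simp [show q ≠ 0 by linarith])]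
    rw [← integral_const_mul]
    refine integral_mono (int_rpow (by linarith) hgC).integrableOn ((hcm _).const_mul _) (fun x => ?_)
    simp only
    have hM : 0 < (w x ^ 2 + ε) ^ ((p - 2) / 2) := Real.rpow_pos_of_pos (hm x) _
    have e1 : |w x| ≤ (w x ^ 2 + ε) ^ ((1:ℝ) / 2) := by
      have := sq_rpow (w x) 1
      rw [Real.rpow_one] at this
      rw [← this]
      exact Real.rpow_le_rpow (by positivity) (by linarith) (by norm_num)
    have e2 : |l * (w x ^ 2 + ε) ^ ((p - 2) / 2) * w x| ≤ l * (w x ^ 2 + ε) ^ ((p - 1) / 2) := by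
      rw [abs_mul, abs_mul, abs_of_pos hl0, abs_of_pos hM, mul_assoc]
      refine mul_le_mul_of_nonneg_left ?_ hl0.le
      calc _ ≤ (w x ^ 2 + ε) ^ ((p - 2) / 2) * (w x ^ 2 + ε) ^ ((1:ℝ) / 2) := by gcongr
        _ = _ := by rw [← Real.rpow_add (hm x)]; congr 1; ring
    have e3 : (p - 1) / 2 * q = p / 2 := by
      have : q + p = p * q := by
        field_simp at hpq; linarith
      nlinarith
    calc _ ≤ (l * (w x ^ 2 + ε) ^ ((p - 1) / 2)) ^ q :=
          Real.rpow_le_rpow (abs_nonneg _) e2 (by linarith)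
      _ = _ := by
        rw [Real.mul_rpow hl0.le (Real.rpow_nonneg (hm x).le _), ← Real.rpow_mul (hm x).le, e3]
  have h3 : ∫ x, |w x| ^ p ≤ ∫ x in T, (w x ^ 2 + ε) ^ (p / 2) := by
    rw [← setIntegral_eq_integral_of_forall_compl_eq_zero
      (f := fun x => |w x| ^ p) (s := T) (fun x hx => by rw [hw0 x hx]; simp [show p ≠ 0 by linarith])]
    refine integral_mono (int_rpow (by linarith) hw).integrableOn (hcm _) (fun x => ?_)
    simp only
    rw [← sq_rpow]
    exact Real.rpow_le_rpow (by positivity) (by linarith) (by linarith)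
  set A := ∫ x in T, (w x ^ 2 + ε) ^ (p / 2)
  set B := ε ^ ((1:ℝ) / 2) * ∫ x in T, (w x ^ 2 + ε) ^ ((p - 1) / 2)
  have hA : 0 ≤ A := integral_nonneg fun x => (Real.rpow_pos_of_pos (hm x) _).le
  have h4 := mul_le_mul_of_nonneg_left h2 hK.le
  have h5 := mul_le_mul_of_nonneg_right hl hA
  have h6 := mul_le_mul_of_nonneg_left h3 (by linarith : 0 ≤ l / 2)
  nlinarith

/-- the unweighted estimate -/
lemma unweighted {d : ℕ} (hd : 1 ≤ d) {p : ℝ} (hp : 1 < p) :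
    ∃ C : ℝ, 0 ≤ C ∧ ∀ φ : EE d → ℝ, CCS φ → ∀ i j,
      ∫ x, |pderiv' i (pderiv' j φ) x| ^ p ≤ C * ∫ x, |lap φ x| ^ p := by
  set q := p / (p - 1) with hqd
  have hp1 : 0 < p - 1 := by linarith
  have hq : 1 < q := by rw [hqd, lt_div_iff₀ hp1]; linarith
  have hpq : 1 / p + 1 / q = 1 := by rw [hqd]; field_simp; ring
  obtain ⟨K, hK, h⟩ := bil hd hp hq hpq
  set l : ℝ := (1 / (2 * K)) ^ (1 / (q - 1)) with hl
  have hl0 : 0 < l := by positivity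
  have hq1 : q - 1 ≠ 0 := by linarith
  have hlq : K * l ^ q ≤ l / 2 := by
    have e : l ^ (q - 1) = 1 / (2 * K) := by
      rw [hl, ← Real.rpow_mul (by positivity), one_div_mul_cancel hq1, Real.rpow_one]
    have e2 : l ^ q = l ^ (q - 1) * l := by
      rw [← Real.rpow_add_one hl0.ne']; congr 1; ring
    rw [e2, e]
    apply le_of_eq; field_simp
  refine ⟨2 * K / l, by positivity, fun φ hφ i j => ?_⟩
  have := dual hp hq hpq hK ((hφ.pderiv j).pderiv i) (fun g hg => h φ g hφ hg i j) l hl0 hlq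
  rw [div_mul_eq_mul_div, le_div_iff₀ hl0]
  linarith

/-- the `L^p` norm -/
noncomputable def nrm {d : ℕ} (p : ℝ) (f : EE d → ℝ) : ℝ :=
  (eLpNorm f (ENNReal.ofReal p) volume).toReal

/-- continuous with compact support -/
def GF {d : ℕ} (f : EE d → ℝ) : Prop := Continuous f ∧ HasCompactSupport f

lemma CCS.gf {d : ℕ} {f : EE d → ℝ} (hf : CCS f) : GF f := ⟨hf.continuous, hf.2⟩

namespace GF
variable {d : ℕ} {f g : EE d → ℝ} {p : ℝ}

lemma fin (hf : GF f) (p : ℝ) : eLpNorm f (ENNReal.ofReal p) volume ≠ ⊤ :=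
  (hf.1.memLp_of_hasCompactSupport hf.2).eLpNorm_ne_top

lemma add (hf : GF f) (hg : GF g) : GF (fun x => f x + g x) := ⟨hf.1.add hg.1, hf.2.add hg.2⟩

lemma mul (hf : GF f) (hg : Continuous g) : GF (fun x => g x * f x) :=
  ⟨hg.mul hf.1, hf.2.mul_left⟩

lemma sum {ι : Type*} (s : Finset ι) {F : ι → EE d → ℝ} (h : ∀ i ∈ s, GF (F i)) :
    GF (fun x => ∑ i ∈ s, F i x) := by
  classical
  induction s using Finset.induction_on with
  | empty => exact ⟨by simpa using continuous_const, by simp only [Finset.sum_empty]; exact HasCompactSupport.zero⟩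
  | insert a s ha ih =>
    simp only [Finset.sum_insert ha]
    exact (h a (by simp)).add (ih fun i hi => h i (by simp [hi]))

lemma nrm_add (hp : 1 ≤ p) (hf : GF f) (hg : GF g) :
    nrm p (fun x => f x + g x) ≤ nrm p f + nrm p g := by
  unfold nrm
  rw [← ENNReal.toReal_add (hf.fin p) (hg.fin p)]
  refine ENNReal.toReal_mono (ENNReal.add_ne_top.2 ⟨hf.fin p, hg.fin p⟩) ?_
  exact eLpNorm_add_le hf.1.aestronglyMeasurable hg.1.aestronglyMeasurable (by simpa using hp)

end GF

lemma nrm_nonneg {d : ℕ} (p : ℝ) (f : EE d → ℝ) : 0 ≤ nrm p f := ENNReal.toReal_nonneg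

lemma nrm_const_mul {d : ℕ} (p c : ℝ) (f : EE d → ℝ) : nrm p (fun x => c * f x) = |c| * nrm p f := by
  unfold nrm
  have := eLpNorm_const_smul c f (ENNReal.ofReal p) (volume : Measure (EE d))
  have e : (fun x => c * f x) = c • f := rfl
  rw [e, this, ENNReal.toReal_mul]
  simp

lemma nrm_mono {d : ℕ} {p : ℝ} {f g : EE d → ℝ} (hg : GF g) (h : ∀ x, |f x| ≤ |g x|) :
    nrm p f ≤ nrm p g :=
  ENNReal.toReal_mono (hg.fin p) (eLpNorm_mono h)

lemma nrm_mulb {d : ℕ} {p A : ℝ} {f g : EE d → ℝ} (hA : 0 ≤ A) (hg : GF g)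
    (h : ∀ x, |f x| ≤ A * |g x|) : nrm p f ≤ A * nrm p g := by
  have := nrm_const_mul p A g
  rw [abs_of_nonneg hA] at this
  rw [← this]
  refine nrm_mono (hg.mul continuous_const) (fun x => ?_)
  rw [abs_mul, abs_of_nonneg hA]; exact h x

lemma nrm_sum {d : ℕ} {p : ℝ} (hp : 1 ≤ p) {ι : Type*} (s : Finset ι) {F : ι → EE d → ℝ}
    (h : ∀ i ∈ s, GF (F i)) : nrm p (fun x => ∑ i ∈ s, F i x) ≤ ∑ i ∈ s, nrm p (F i) := by
  classical
  induction s using Finset.induction_on with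
  | empty => simp [nrm]
  | insert a s ha ih =>
    simp only [Finset.sum_insert ha]
    have h1 := GF.nrm_add hp (h a (by simp)) (GF.sum s fun i hi => h i (by simp [hi]))
    have h2 := ih fun i hi => h i (by simp [hi])
    linarith

lemma nrm_eq {d : ℕ} {p : ℝ} (hp : 0 < p) {f : EE d → ℝ} (hf : GF f) :
    nrm p f = (∫ x, |f x| ^ p) ^ (1 / p) := by
  unfold nrm
  have hm : MemLp f (ENNReal.ofReal p) volume := hf.1.memLp_of_hasCompactSupport hf.2
  rw [hm.eLpNorm_eq_integral_rpow_norm (by simpa using hp) (by simp)]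
  rw [ENNReal.toReal_ofReal hp.le, ENNReal.toReal_ofReal (by positivity)]
  simp

lemma avg_le {d : ℕ} {p : ℝ} (hp : 1 ≤ p) {F : EE d → ℝ} (hF : Continuous F) (v : EE d) :
    eLpNorm (fun x => ∫ σ in Set.Ioc (0:ℝ) 1, |F (x + σ • v)|) (ENNReal.ofReal p) volume ≤
      eLpNorm F (ENNReal.ofReal p) volume := by
  have hp0 : 0 < p := by linarith
  have h0 : ENNReal.ofReal p ≠ 0 := by simpa using hp0
  rw [eLpNorm_eq_lintegral_rpow_enorm_toReal h0 (by simp), eLpNorm_eq_lintegral_rpow_enorm_toReal h0 (by simp),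
    ENNReal.toReal_ofReal hp0.le]
  refine ENNReal.rpow_le_rpow ?_ (by positivity)
  set μ : Measure ℝ := volume.restrict (Set.Ioc (0:ℝ) 1) with hμ
  have hpr : μ Set.univ = 1 := by simp [hμ]
  calc ∫⁻ x, ‖∫ σ in Set.Ioc (0:ℝ) 1, |F (x + σ • v)|‖ₑ ^ p
      ≤ ∫⁻ x, ∫⁻ σ, ‖F (x + σ • v)‖ₑ ^ p ∂μ := by
        refine lintegral_mono fun x => ?_
        have h1 : ‖∫ σ in Set.Ioc (0:ℝ) 1, |F (x + σ • v)|‖ₑ ≤ ∫⁻ σ, ‖F (x + σ • v)‖ₑ ∂μ := by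
          refine (enorm_integral_le_lintegral_enorm _).trans (le_of_eq ?_)
          refine lintegral_congr fun σ => ?_
          rw [← Real.norm_eq_abs, enorm_norm]
        have hc : Continuous (fun σ : ℝ => F (x + σ • v)) := by fun_prop
        have h2 := eLpNorm_le_eLpNorm_mul_rpow_measure_univ (μ := μ) (p := 1) (q := ENNReal.ofReal p)
          (by simpa using hp) hc.aestronglyMeasurable
        rw [hpr, ENNReal.one_rpow, mul_one, eLpNorm_one_eq_lintegral_enorm,
          eLpNorm_eq_lintegral_rpow_enorm_toReal h0 (by simp), ENNReal.toReal_ofReal hp0.le] at h2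
        calc _ ≤ ((∫⁻ σ, ‖F (x + σ • v)‖ₑ ^ p ∂μ) ^ (1 / p)) ^ p :=
              ENNReal.rpow_le_rpow (h1.trans h2) hp0.le
          _ = _ := by rw [← ENNReal.rpow_mul, one_div_mul_cancel hp0.ne', ENNReal.rpow_one]
    _ = ∫⁻ σ, (∫⁻ x, ‖F (x + σ • v)‖ₑ ^ p) ∂μ := by
        refine lintegral_lintegral_swap ?_
        have : Continuous (Function.uncurry fun (x : EE d) (σ : ℝ) => ‖F (x + σ • v)‖ₑ) := by
          unfold Function.uncurry
          fun_prop
        exact (this.measurable.pow_const p).aemeasurable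
    _ = ∫⁻ _, (∫⁻ x, ‖F x‖ₑ ^ p) ∂μ := by
        refine lintegral_congr fun σ => ?_
        rw [lintegral_add_right_eq_self (fun x => ‖F x‖ₑ ^ p)]
    _ = ∫⁻ x, ‖F x‖ₑ ^ p := by rw [lintegral_const, hpr, mul_one]

lemma taylor_pt {d : ℕ} {h : EE d → ℝ} (hh : CCS h) (k : Fin d) {t : ℝ} (ht : 0 < t) (x : EE d) :
    |t * pderiv' k h x| ≤ |h (x + t • ev k)| + |h x| +
      t ^ 2 * ∫ σ in Set.Ioc (0:ℝ) 1, |pderiv' k (pderiv' k h) (x + σ • (t • ev k))| := by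
  have hd1 : ∀ s : ℝ, HasDerivAt (fun s : ℝ => h (x + s • (t • ev k)))
      (t * pderiv' k h (x + s • (t • ev k))) s := fun s => by
    refine hda_of (hh.deriv_line x (t • ev k) s) (fun _ => rfl) ?_
    rw [map_smul]; rfl
  have hd2 : ∀ s : ℝ, HasDerivAt (fun s : ℝ => t * pderiv' k h (x + s • (t • ev k)))
      (t * (t * pderiv' k (pderiv' k h) (x + s • (t • ev k)))) s := fun s => by
    refine HasDerivAt.const_mul t ?_
    refine hda_of ((hh.pderiv k).deriv_line x (t • ev k) s) (fun _ => rfl) ?_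
    rw [map_smul]; rfl
  have hc2 := ((hh.pderiv k).pderiv k).continuous
  obtain ⟨s, hs, hmv⟩ := exists_hasDerivAt_eq_slope (fun s : ℝ => h (x + s • (t • ev k))) _ one_pos
    (fun s _ => (hd1 s).continuousAt.continuousWithinAt) (fun s _ => hd1 s)
  simp only [sub_zero, div_one, one_smul, zero_smul, add_zero] at hmv
  have hft := intervalIntegral.integral_eq_sub_of_hasDerivAt (a := 0) (b := s)
    (fun r _ => hd2 r) (Continuous.intervalIntegrable (by fun_prop) _ _)
  simp only [zero_smul, add_zero] at hft
  have e1 : t * pderiv' k h x = h (x + t • ev k) - h x -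
      ∫ r in (0:ℝ)..s, t * (t * pderiv' k (pderiv' k h) (x + r • (t • ev k))) := by
    rw [hft, ← hmv]; ring
  have e2 : |∫ r in (0:ℝ)..s, t * (t * pderiv' k (pderiv' k h) (x + r • (t • ev k)))| ≤
      t ^ 2 * ∫ σ in Set.Ioc (0:ℝ) 1, |pderiv' k (pderiv' k h) (x + σ • (t • ev k))| := by
    have hi : IntegrableOn (fun σ : ℝ => t ^ 2 * |pderiv' k (pderiv' k h) (x + σ • (t • ev k))|)
        (Set.Ioc (0:ℝ) 1) := by
      have hcc : Continuous (fun σ : ℝ => t ^ 2 * |pderiv' k (pderiv' k h) (x + σ • (t • ev k))|) := by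
        fun_prop
      exact (hcc.continuousOn.integrableOn_compact isCompact_Icc).mono_set Set.Ioc_subset_Icc_self
    rw [intervalIntegral.integral_of_le hs.1.le, ← integral_const_mul]
    refine (norm_integral_le_integral_norm
      (fun r : ℝ => t * (t * pderiv' k (pderiv' k h) (x + r • (t • ev k))))).trans ?_
    have e3 : ∀ σ : ℝ, ‖t * (t * pderiv' k (pderiv' k h) (x + σ • (t • ev k)))‖ =
        t ^ 2 * |pderiv' k (pderiv' k h) (x + σ • (t • ev k))| := fun σ => by
      rw [Real.norm_eq_abs, abs_mul, abs_mul, abs_of_pos ht]; ring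
    simp only [e3]
    exact setIntegral_mono_set hi (Filter.Eventually.of_forall fun σ => by positivity)
      (Filter.Eventually.of_forall (Set.Ioc_subset_Ioc_right hs.2.le))
  rw [e1]
  refine (abs_sub _ _).trans (add_le_add (abs_sub _ _) e2)

lemma interp {d : ℕ} {p : ℝ} (hp : 1 ≤ p) {h : EE d → ℝ} (hh : CCS h) (k : Fin d) {t : ℝ}
    (ht : 0 < t) :
    nrm p (pderiv' k h) ≤ t * nrm p (pderiv' k (pderiv' k h)) + 2 / t * nrm p h := by
  have hc2 := ((hh.pderiv k).pderiv k).continuous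
  set P := ENNReal.ofReal p
  have hP : 1 ≤ P := by simpa [P] using hp
  have f1 := hh.gf.fin p
  have f2 := ((hh.pderiv k).pderiv k).gf.fin p
  set G : EE d → ℝ := fun x => ∫ σ in Set.Ioc (0:ℝ) 1, |pderiv' k (pderiv' k h) (x + σ • (t • ev k))| with hG
  have hGc : Continuous G := by
    have : Continuous (fun x => ∫ σ in (0:ℝ)..1, |pderiv' k (pderiv' k h) (x + σ • (t • ev k))|) := by
      refine intervalIntegral.continuous_parametric_intervalIntegral_of_continuous' ?_ _ _
      unfold Function.uncurry; fun_prop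
    simpa only [intervalIntegral.integral_of_le zero_le_one] using this
  have hGn := avg_le hp hc2 (t • ev k)
  have ht1 : eLpNorm (fun x => |h (x + t • ev k)|) P volume = eLpNorm h P volume := by
    have e := eLpNorm_comp_measurePreserving (p := P) (g := h)
      hh.continuous.aestronglyMeasurable (measurePreserving_add_right volume (t • ev k))
    rw [← e]
    exact eLpNorm_norm (h ∘ fun x => x + t • ev k)
  have ht2 : eLpNorm (fun x => |h x|) P volume = eLpNorm h P volume := eLpNorm_norm h
  have hcont := hh.continuous
  have m1 : AEStronglyMeasurable (fun x => |h (x + t • ev k)|) volume :=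
    Continuous.aestronglyMeasurable (by fun_prop)
  have m2 : AEStronglyMeasurable (fun x => |h x|) volume :=
    Continuous.aestronglyMeasurable (by fun_prop)
  have m3 : AEStronglyMeasurable (t ^ 2 • G) volume := (hGc.const_smul _).aestronglyMeasurable
  have key : eLpNorm (fun x => t * pderiv' k h x) P volume ≤
      eLpNorm h P volume + eLpNorm h P volume + ‖t ^ 2‖ₑ * eLpNorm (pderiv' k (pderiv' k h)) P volume := by
    calc _ ≤ eLpNorm ((fun x => |h (x + t • ev k)|) + (fun x => |h x|) + t ^ 2 • G) P volume := by
          refine eLpNorm_mono fun x => ?_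
          refine (taylor_pt hh k ht x).trans (le_abs_self _)
      _ ≤ _ := (eLpNorm_add_le (m1.add m2) m3 hP)
      _ ≤ _ := add_le_add (eLpNorm_add_le m1 m2 hP) le_rfl
      _ ≤ _ := by
          rw [ht1, ht2, eLpNorm_const_smul]
          gcongr
  have key2 := ENNReal.toReal_mono (by finiteness) key
  rw [ENNReal.toReal_add (by finiteness) (by finiteness), ENNReal.toReal_add f1 f1,
    ENNReal.toReal_mul] at key2
  have key3 : nrm p (fun x => t * pderiv' k h x) ≤ nrm p h + nrm p h +
    t ^ 2 * nrm p (pderiv' k (pderiv' k h)) := by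
    refine key2.trans (le_of_eq ?_)
    simp [nrm, P]
  rw [nrm_const_mul, abs_of_pos ht] at key3
  have : t * nrm p (pderiv' k h) ≤ t * (t * nrm p (pderiv' k (pderiv' k h)) + 2 / t * nrm p h) := by
    refine key3.trans (le_of_eq ?_)
    field_simp; ring
  exact le_of_mul_le_mul_left this ht

lemma unweighted_nrm {d : ℕ} (hd : 1 ≤ d) {p : ℝ} (hp : 1 < p) :
    ∃ C : ℝ, 0 ≤ C ∧ ∀ φ : EE d → ℝ, CCS φ → ∀ i j,
      nrm p (pderiv' i (pderiv' j φ)) ≤ C * nrm p (lap φ) := by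
  obtain ⟨C, hC, h⟩ := unweighted hd hp
  have hp0 : 0 < p := by linarith
  refine ⟨C ^ (1 / p), by positivity, fun φ hφ i j => ?_⟩
  rw [nrm_eq hp0 ((hφ.pderiv j).pderiv i).gf, nrm_eq hp0 hφ.lap.gf]
  have h0 : 0 ≤ ∫ x, |lap φ x| ^ p := integral_nonneg fun x => by positivity
  have h1 : 0 ≤ ∫ x, |pderiv' i (pderiv' j φ) x| ^ p := integral_nonneg fun x => by positivity
  rw [← Real.mul_rpow hC h0]
  exact Real.rpow_le_rpow h1 (h φ hφ i j) (by positivity)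

/-- the weight -/
noncomputable def Wt {d : ℕ} (a : ℝ) (x : EE d) : ℝ := (1 + ‖x‖ ^ 2) ^ a

lemma Wt_base {d : ℕ} (x : EE d) : 0 < 1 + ‖x‖ ^ 2 := by positivity

lemma Wt_pos {d : ℕ} (a : ℝ) (x : EE d) : 0 < Wt a x := Real.rpow_pos_of_pos (Wt_base x) a

lemma Wt_smooth {d : ℕ} (a : ℝ) : ContDiff ℝ (⊤ : ℕ∞) (Wt (d := d) a) :=
  (contDiff_const.add (contDiff_norm_sq ℝ)).rpow_const_of_ne (fun x => (Wt_base x).ne')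

lemma jb_eq {d : ℕ} (δ : ℝ) (x : EE d) : jb x ^ δ = Wt (δ / 2) x := by
  unfold jb Wt
  rw [Real.sqrt_eq_rpow, ← Real.rpow_mul (Wt_base x).le]
  congr 1; ring

lemma Wt_d {d : ℕ} (a : ℝ) (k : Fin d) (x : EE d) :
    pderiv' k (Wt a) x = 2 * a * x k * Wt (a - 1) x := by
  unfold pderiv' Wt
  have h1 : HasFDerivAt (fun x : EE d => 1 + ‖x‖ ^ 2) (2 • innerSL ℝ x) x :=
    ((hasStrictFDerivAt_norm_sq x).hasFDerivAt).const_add 1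
  rw [(h1.rpow_const (p := a) (Or.inl (Wt_base x).ne')).fderiv]
  have hi : inner ℝ x (EuclideanSpace.single k (1:ℝ)) = x k := by
    rw [EuclideanSpace.inner_single_right]; simp
  simp [hi]
  ring

lemma pderiv_mul {d : ℕ} {u v : EE d → ℝ} (hu : Differentiable ℝ u) (hv : Differentiable ℝ v)
    (k : Fin d) : pderiv' k (fun x => u x * v x) = fun x => u x * pderiv' k v x + pderiv' k u x * v x := by
  funext x
  unfold pderiv'
  rw [fderiv_fun_mul (hu x) (hv x)]
  simp
  ring

lemma pderiv_add {d : ℕ} {u v : EE d → ℝ} (hu : Differentiable ℝ u) (hv : Differentiable ℝ v)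
    (k : Fin d) : pderiv' k (fun x => u x + v x) = fun x => pderiv' k u x + pderiv' k v x := by
  funext x
  unfold pderiv'
  rw [fderiv_fun_add (hu x) (hv x)]
  simp

lemma pderiv_smooth {d : ℕ} {u : EE d → ℝ} (hu : ContDiff ℝ (⊤ : ℕ∞) u) (k : Fin d) :
    ContDiff ℝ (⊤ : ℕ∞) (pderiv' k u) := by
  unfold pderiv'
  have : ContDiff ℝ (⊤ : ℕ∞) (fderiv ℝ u) := hu.fderiv_right (by simp)
  exact this.clm_apply contDiff_const

lemma Wt_dd {d : ℕ} (a : ℝ) (l k : Fin d) (x : EE d) :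
    pderiv' l (pderiv' k (Wt a)) x =
      2 * a * (ev l : EE d) k * Wt (a - 1) x + 2 * a * x k * (2 * (a - 1) * x l * Wt (a - 2) x) := by
  have e : pderiv' k (Wt (d := d) a) = fun x => (2 * a * x k) * Wt (a - 1) x := funext (Wt_d a k)
  have hl : Differentiable ℝ (fun x : EE d => 2 * a * x k) := by fun_prop
  rw [e, pderiv_mul hl ((Wt_smooth _).differentiable (by simp))]
  simp only [Wt_d]
  have : pderiv' l (fun x : EE d => 2 * a * x k) x = 2 * a * (ev l : EE d) k := by
    unfold pderiv'
    have h1 : HasFDerivAt (fun x : EE d => 2 * a * x k)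
        ((2 * a) • (EuclideanSpace.proj k : EE d →L[ℝ] ℝ)) x :=
      ((EuclideanSpace.proj k : EE d →L[ℝ] ℝ).hasFDerivAt).const_mul (2 * a)
    rw [h1.fderiv]
    simp
  rw [this, show a - 1 - 1 = a - 2 by ring]
  ring

lemma coord_le_s8 {d : ℕ} (x : EE d) (k : Fin d) : |x k| ≤ ‖x‖ := by
  simpa using PiLp.norm_apply_le x k

lemma Wt_succ {d : ℕ} (a : ℝ) (x : EE d) : Wt a x = (1 + ‖x‖ ^ 2) * Wt (a - 1) x := by
  unfold Wt
  rw [mul_comm, ← Real.rpow_add_one (Wt_base x).ne']; congr 1; ring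

lemma Wt_bd {d : ℕ} (a : ℝ) : ∃ A : ℝ, 0 ≤ A ∧ (∀ (k : Fin d) x, |pderiv' k (Wt a) x| ≤ A * Wt a x) ∧
    ∀ (l k : Fin d) x, |pderiv' l (pderiv' k (Wt a)) x| ≤ A * Wt a x := by
  refine ⟨2 * |a| + 4 * (|a| * |a - 1|), by positivity, fun k x => ?_, fun l k x => ?_⟩
  · rw [Wt_d, abs_mul, abs_of_pos (Wt_pos _ _), Wt_succ a x, ← mul_assoc]
    refine mul_le_mul_of_nonneg_right ?_ (Wt_pos _ _).le
    rw [abs_mul, abs_mul, abs_two]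
    have h1 := coord_le_s8 x k
    have h2 : |x k| ≤ 1 + ‖x‖ ^ 2 := by nlinarith [sq_nonneg (‖x‖ - 1), norm_nonneg x]
    have h3 : 0 ≤ 4 * (|a| * |a - 1|) * (1 + ‖x‖ ^ 2) := by positivity
    have h4 := mul_le_mul_of_nonneg_left h2 (by positivity : 0 ≤ 2 * |a|)
    nlinarith
  · rw [Wt_dd, Wt_succ a x, Wt_succ (a - 1) x, show a - 1 - 1 = a - 2 by ring]
    have hW := Wt_pos (a - 2) x
    have e : 2 * a * (ev l : EE d) k * ((1 + ‖x‖ ^ 2) * Wt (a - 2) x) +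
        2 * a * x k * (2 * (a - 1) * x l * Wt (a - 2) x) =
        (2 * a * (ev l : EE d) k * (1 + ‖x‖ ^ 2) + 4 * (a * (a - 1)) * (x k * x l)) * Wt (a - 2) x := by
      ring
    rw [e, abs_mul, abs_of_pos hW, show ∀ Z : ℝ, Z * ((1 + ‖x‖ ^ 2) * ((1 + ‖x‖ ^ 2) * Wt (a - 2) x)) =
      Z * ((1 + ‖x‖ ^ 2) * (1 + ‖x‖ ^ 2)) * Wt (a - 2) x from fun Z => by ring]
    refine mul_le_mul_of_nonneg_right ?_ hW.le
    refine (abs_add_le _ _).trans ?_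
    have hB := Wt_base x
    have h1 : |(ev l : EE d) k| ≤ 1 := by
      have := coord_le_s8 (ev l : EE d) k
      simpa using this
    have h2 : |x k * x l| ≤ ‖x‖ ^ 2 := by
      rw [abs_mul, sq]
      exact mul_le_mul (coord_le_s8 x k) (coord_le_s8 x l) (abs_nonneg _) (norm_nonneg _)
    have hB1 : 1 ≤ 1 + ‖x‖ ^ 2 := by nlinarith [sq_nonneg ‖x‖]
    have h3 : |2 * a * (ev l : EE d) k * (1 + ‖x‖ ^ 2)| ≤ 2 * |a| * ((1 + ‖x‖ ^ 2) * (1 + ‖x‖ ^ 2)) := by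
      rw [abs_mul, abs_mul, abs_mul, abs_two, abs_of_pos hB]
      calc _ ≤ 2 * |a| * 1 * (1 + ‖x‖ ^ 2) := by gcongr
        _ ≤ 2 * |a| * ((1 + ‖x‖ ^ 2) * (1 + ‖x‖ ^ 2)) := by
          rw [mul_one]
          refine mul_le_mul_of_nonneg_left ?_ (by positivity)
          nlinarith
    have h4 : |4 * (a * (a - 1)) * (x k * x l)| ≤ 4 * (|a| * |a - 1|) * ((1 + ‖x‖ ^ 2) * (1 + ‖x‖ ^ 2)) := by
      rw [abs_mul, abs_mul, abs_mul a, abs_of_pos (by norm_num : (0:ℝ) < 4)]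
      refine mul_le_mul_of_nonneg_left (h2.trans ?_) (by positivity)
      nlinarith
    calc _ ≤ _ := add_le_add h3 h4
      _ = _ := by ring

lemma absorb {dd A C S L G Λ t : ℝ} (hd0 : 0 ≤ dd) (hA : 0 ≤ A) (hC : 0 ≤ C)
    (hL0 : 0 ≤ L) (hG0 : 0 ≤ G) (ht : t = 1 / (4 * A * dd * C + 1))
    (hS : S ≤ dd * (t * (C * L) + 2 / t * G + A * G)) (hL : L ≤ Λ + 2 * A * S + dd * A * G) :
    L ≤ 2 * Λ + 2 * (2 * A * dd * (2 / t + A) + dd * A) * G := by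
  have hD : 0 < 4 * A * dd * C + 1 := by positivity
  have h1 : (4 * A * dd * C) * t ≤ 1 := by
    rw [ht, mul_one_div, div_le_one hD]; linarith
  have h2 := mul_le_mul_of_nonneg_left hS (by positivity : 0 ≤ 2 * A)
  have h3 := mul_le_mul_of_nonneg_right h1 hL0
  nlinarith

lemma weighted {d : ℕ} (hd : 1 ≤ d) {p : ℝ} (hp : 1 < p) (a : ℝ) :
    ∃ C : ℝ, 0 ≤ C ∧ ∀ g : EE d → ℝ, CCS g →
      (∀ k, nrm p (fun x => Wt a x * pderiv' k g x) ≤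
        C * (nrm p (fun x => Wt a x * lap g x) + nrm p (fun x => Wt a x * g x))) ∧
      ∀ i j, nrm p (fun x => Wt a x * pderiv' i (pderiv' j g) x) ≤
        C * (nrm p (fun x => Wt a x * lap g x) + nrm p (fun x => Wt a x * g x)) := by
  obtain ⟨C, hC, hun⟩ := unweighted_nrm hd hp
  obtain ⟨A, hA, hA1, hA2⟩ := Wt_bd (d := d) a
  set t : ℝ := 1 / (4 * A * d * C + 1) with ht
  have ht0 : 0 < t := by positivity
  set M : ℝ := 2 * (2 * A * d * (2 / t + A) + d * A) with hM
  have hM0 : 0 ≤ M := by positivity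
  set C1 : ℝ := t * (C * (2 + M)) + (2 / t + A) with hC1
  have hC10 : 0 ≤ C1 := by positivity
  refine ⟨C1 + (C * (2 + M) + 2 * A * C1 + A), by positivity, fun g hg => ?_⟩
  have hp1 : 1 ≤ p := hp.le
  have hWs := Wt_smooth (d := d) a
  have hWd : Differentiable ℝ (Wt (d := d) a) := hWs.differentiable (by simp)
  set N : (EE d → ℝ) → ℝ := fun f => nrm p (fun x => Wt a x * f x) with hN
  have hWg : ∀ {f : EE d → ℝ}, CCS f → GF (fun x => Wt a x * f x) := fun hf => (hf.mul hWs).gf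
  set h : EE d → ℝ := fun x => Wt a x * g x with hh
  have hhC : CCS h := hg.mul hWs
  have bd : ∀ {u f : EE d → ℝ}, (∀ x, |u x| ≤ A * Wt a x) → CCS f →
      nrm p (fun x => u x * f x) ≤ A * N f := by
    intro u f hu hf
    refine nrm_mulb hA (hWg hf) (fun x => ?_)
    rw [abs_mul, abs_mul, abs_of_pos (Wt_pos a x), ← mul_assoc]
    exact mul_le_mul_of_nonneg_right (hu x) (abs_nonneg _)
  have e1 : ∀ k, pderiv' k h = fun x => Wt a x * pderiv' k g x + pderiv' k (Wt a) x * g x :=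
    fun k => pderiv_mul hWd hg.differentiable k
  have e2 : ∀ i j, pderiv' i (pderiv' j h) = fun x => Wt a x * pderiv' i (pderiv' j g) x +
      pderiv' i (Wt a) x * pderiv' j g x + pderiv' j (Wt a) x * pderiv' i g x
        + pderiv' i (pderiv' j (Wt a)) x * g x := by
    intro i j
    have hWj : Differentiable ℝ (pderiv' j (Wt (d := d) a)) :=
      (pderiv_smooth hWs j).differentiable (by simp)
    rw [e1 j, pderiv_add (u := fun x => Wt a x * pderiv' j g x)
      (v := fun x => pderiv' j (Wt a) x * g x) (hWd.mul (hg.pderiv j).differentiable) (hWj.mul hg.differentiable),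
      pderiv_mul hWd (hg.pderiv j).differentiable, pderiv_mul hWj hg.differentiable]
    funext x
    ring
  have gfd : ∀ {f : EE d → ℝ} (k), CCS f → GF (fun x => pderiv' k (Wt a) x * f x) :=
    fun k hf => (hf.mul (pderiv_smooth hWs k)).gf
  have gfdd : ∀ {f : EE d → ℝ} (i j), CCS f → GF (fun x => pderiv' i (pderiv' j (Wt a)) x * f x) :=
    fun i j hf => (hf.mul (pderiv_smooth (pderiv_smooth hWs j) i)).gf
  have neg : ∀ {f : EE d → ℝ}, GF f → GF (fun x => (-1) * f x) := fun hf => hf.mul continuous_const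
  have nneg : ∀ f : EE d → ℝ, nrm p (fun x => (-1) * f x) = nrm p f := fun f => by
    rw [nrm_const_mul]; simp
  -- (1)
  have i1 : ∀ k, N (pderiv' k g) ≤ nrm p (pderiv' k h) + A * N g := by
    intro k
    have e : (fun x => Wt a x * pderiv' k g x) =
        fun x => pderiv' k h x + (-1) * (pderiv' k (Wt a) x * g x) := by
      funext x; rw [e1]; ring
    have h1 := GF.nrm_add hp1 (hhC.pderiv k).gf (neg (gfd k hg))
    rw [← e, nneg] at h1
    exact h1.trans (add_le_add le_rfl (bd (hA1 k) hg))
  -- (2)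
  have i2 : ∀ i j, N (pderiv' i (pderiv' j g)) ≤ nrm p (pderiv' i (pderiv' j h)) +
      A * N (pderiv' j g) + A * N (pderiv' i g) + A * N g := by
    intro i j
    have e : (fun x => Wt a x * pderiv' i (pderiv' j g) x) =
        fun x => pderiv' i (pderiv' j h) x + (-1) * (pderiv' i (Wt a) x * pderiv' j g x) +
          (-1) * (pderiv' j (Wt a) x * pderiv' i g x) +
          (-1) * (pderiv' i (pderiv' j (Wt a)) x * g x) := by
      funext x; rw [e2]; ring
    have g0 := ((hhC.pderiv j).pderiv i).gf
    have g1 := neg (gfd i (hg.pderiv j))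
    have g2 := neg (gfd j (hg.pderiv i))
    have g3 := neg (gfdd i j hg)
    have h1 := GF.nrm_add hp1 ((g0.add g1).add g2) g3
    have h2 := GF.nrm_add hp1 (g0.add g1) g2
    have h3 := GF.nrm_add hp1 g0 g1
    rw [← e, nneg] at h1
    rw [nneg] at h2 h3
    have b1 := bd (hA1 i) (hg.pderiv j)
    have b2 := bd (hA1 j) (hg.pderiv i)
    have b3 := bd (hA2 i j) hg
    simp only [hN] at *
    linarith
  -- (3)
  have i3 : nrm p (lap h) ≤ N (lap g) + 2 * A * (∑ k, N (pderiv' k g)) + d * A * N g := by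
    have e : lap h = fun x => Wt a x * lap g x + ∑ k, (2 * (pderiv' k (Wt a) x * pderiv' k g x) +
        pderiv' k (pderiv' k (Wt a)) x * g x) := by
      funext x
      unfold lap
      rw [Finset.mul_sum, ← Finset.sum_add_distrib]
      refine Finset.sum_congr rfl fun k _ => ?_
      rw [e2]; ring
    have gk : ∀ k : Fin d, GF (fun x => 2 * (pderiv' k (Wt a) x * pderiv' k g x)) :=
      fun k => (gfd k (hg.pderiv k)).mul continuous_const
    have gs : ∀ k ∈ (Finset.univ : Finset (Fin d)),
        GF (fun x => 2 * (pderiv' k (Wt a) x * pderiv' k g x) +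
          pderiv' k (pderiv' k (Wt a)) x * g x) :=
      fun k _ => (gk k).add (gfdd k k hg)
    have h1 := GF.nrm_add hp1 (hWg hg.lap) (GF.sum _ gs)
    rw [← e] at h1
    have h2 := nrm_sum hp1 _ gs
    have h3 : ∑ k : Fin d, nrm p (fun x => 2 * (pderiv' k (Wt a) x * pderiv' k g x) +
          pderiv' k (pderiv' k (Wt a)) x * g x) ≤ ∑ k : Fin d, (2 * A * N (pderiv' k g) + A * N g) := by
      refine Finset.sum_le_sum fun k _ => ?_
      have b0 := GF.nrm_add hp1 (gk k) (gfdd k k hg)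
      rw [nrm_const_mul, abs_two] at b0
      have b1 := bd (hA1 k) (hg.pderiv k)
      have b2 := bd (hA2 k k) hg
      linarith
    rw [Finset.sum_add_distrib, ← Finset.mul_sum, Finset.sum_const, Finset.card_univ,
      Fintype.card_fin, nsmul_eq_mul] at h3
    have h4 : nrm p (fun x => Wt a x * lap g x) = N (lap g) := rfl
    rw [h4] at h1
    linarith
  have hL0 := nrm_nonneg p (lap h)
  have hG0 : 0 ≤ N g := nrm_nonneg _ _
  have hΛ0 : 0 ≤ N (lap g) := nrm_nonneg _ _
  have i4 : ∀ k, N (pderiv' k g) ≤ t * (C * nrm p (lap h)) + 2 / t * N g + A * N g := by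
    intro k
    have h1 := interp hp1 hhC k ht0
    have h2 := mul_le_mul_of_nonneg_left (hun h hhC k k) ht0.le
    have h3 := i1 k
    have h4 : nrm p h = N g := rfl
    rw [h4] at h1
    linarith
  have i5 : ∑ k, N (pderiv' k g) ≤ d * (t * (C * nrm p (lap h)) + 2 / t * N g + A * N g) := by
    refine (Finset.sum_le_sum fun k _ => i4 k).trans (le_of_eq ?_)
    simp
    try ring
  have i6 := absorb (Nat.cast_nonneg d) hA hC hL0 hG0 ht i5 i3
  have i7 : nrm p (lap h) ≤ (2 + M) * (N (lap g) + N g) := by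
    have : 0 ≤ M * N (lap g) := by positivity
    linarith
  have i8 : ∀ k, N (pderiv' k g) ≤ C1 * (N (lap g) + N g) := by
    intro k
    refine (i4 k).trans ?_
    have h1 := mul_le_mul_of_nonneg_left i7 (mul_nonneg ht0.le hC)
    have h2 : 0 ≤ (2 / t + A) * N (lap g) := by positivity
    rw [hC1]
    linarith
  have hT0 : 0 ≤ N (lap g) + N g := by positivity
  refine ⟨fun k => (i8 k).trans ?_, fun i j => (i2 i j).trans ?_⟩
  · refine mul_le_mul_of_nonneg_right ?_ hT0
    have : 0 ≤ C * (2 + M) + 2 * A * C1 + A := by positivity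
    linarith
  · show _ ≤ (C1 + (C * (2 + M) + 2 * A * C1 + A)) * (N (lap g) + N g)
    have h1 := (hun h hhC i j).trans (mul_le_mul_of_nonneg_left i7 hC)
    have h2 := mul_le_mul_of_nonneg_left (i8 i) hA
    have h3 := mul_le_mul_of_nonneg_left (i8 j) hA
    have h4 : 0 ≤ A * N (lap g) := by positivity
    have h5 : 0 ≤ C1 * (N (lap g) + N g) := by positivity
    linarith

lemma iter_list {d : ℕ} (i : Fin d) (n : ℕ) (f : EE d → ℝ) :
    (pderiv' i)^[n] f = (List.replicate n i).foldr (fun i g => pderiv' i g) f := by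
  induction n with
  | zero => rfl
  | succ n ih => rw [Function.iterate_succ_apply', ih, List.replicate_succ, List.foldr_cons]

lemma mderiv_list {d : ℕ} (α : Fin d → ℕ) (f : EE d → ℝ) (l : List (Fin d)) :
    ∃ L : List (Fin d), L.length = (l.map α).sum ∧
      l.foldr (fun i g => (pderiv' i)^[α i] g) f = L.foldr (fun i g => pderiv' i g) f := by
  induction l with
  | nil => exact ⟨[], rfl, rfl⟩
  | cons i l ih =>
    obtain ⟨L, h1, h2⟩ := ih
    refine ⟨List.replicate (α i) i ++ L, by simp [h1], ?_⟩
    rw [List.foldr_cons, h2, iter_list, List.foldr_append]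

lemma mderiv_cases {d : ℕ} (α : Fin d → ℕ) (hα : ∑ i, α i ≤ 2) (f : EE d → ℝ) :
    mderiv α f = f ∨ (∃ k, mderiv α f = pderiv' k f) ∨
      ∃ i j, mderiv α f = pderiv' i (pderiv' j f) := by
  obtain ⟨L, h1, h2⟩ := mderiv_list α f (List.finRange d)
  rw [← Fin.sum_univ_def] at h1
  have h3 : mderiv α f = L.foldr (fun i g => pderiv' i g) f := h2
  rw [h3]
  match L, h1 with
  | [], _ => exact Or.inl rfl
  | [k], _ => exact Or.inr (Or.inl ⟨k, rfl⟩)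
  | [i, j], _ => exact Or.inr (Or.inr ⟨i, j, rfl⟩)
  | i :: j :: k :: l, h => simp at h; omega


/-- Elliptic a priori estimate:
`‖g‖_{H^{2,p}_δ} ≤ C (‖⟨·⟩^δ Δg‖_{L^p} + ‖⟨·⟩^δ g‖_{L^p})` for `g ∈ C_c^∞(ℝ^d)`. -/
theorem stmt8 (d : ℕ) (hd : 1 ≤ d) (p : ℝ) (hp : 1 < p) (δ : ℝ) :
    ∃ C : ℝ, 0 < C ∧ ∀ g : EuclideanSpace ℝ (Fin d) → ℝ,
      ContDiff ℝ (⊤ : ℕ∞) g → HasCompactSupport g →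
        Hnorm d 2 p δ g ≤ C * (wLp p δ (lap g) + wLp p δ g) := by
  obtain ⟨C, hC, h⟩ := weighted hd hp (δ / 2)
  have e : ∀ f : EuclideanSpace ℝ (Fin d) → ℝ, wLp p δ f = nrm p (fun x => Wt (δ / 2) x * f x) := by
    intro f
    unfold wLp nrm
    simp only [jb_eq, smul_eq_mul]
  set s := Finset.univ.filter (fun α : Fin d → Fin (2 + 1) => ∑ i, (α i : ℕ) ≤ 2) with hs
  refine ⟨s.card * (C + 1) + 1, by positivity, fun g hg1 hg2 => ?_⟩
  obtain ⟨h1, h2⟩ := h g ⟨hg1, hg2⟩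
  simp only [← e] at h1 h2
  have n1 : 0 ≤ wLp p δ (lap g) := ENNReal.toReal_nonneg
  have n2 : 0 ≤ wLp p δ g := ENNReal.toReal_nonneg
  have key : ∀ α ∈ s, wLp p δ (mderiv (fun i => (α i : ℕ)) g) ≤
      (C + 1) * (wLp p δ (lap g) + wLp p δ g) := by
    intro α hα
    rw [hs, Finset.mem_filter] at hα
    have n3 : 0 ≤ C * (wLp p δ (lap g) + wLp p δ g) := by positivity
    rcases mderiv_cases (fun i => (α i : ℕ)) hα.2 g with h0 | ⟨k, h0⟩ | ⟨i, j, h0⟩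
    · rw [h0]; linarith
    · rw [h0]; have := h1 k; linarith
    · rw [h0]; have := h2 i j; linarith
  have := Finset.sum_le_card_nsmul s _ _ key
  rw [nsmul_eq_mul] at this
  unfold Hnorm
  refine this.trans ?_
  linarith
end
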